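/- arXiv:1902.07252 — 2 statements merged into one kernel-verified Lean document; each statement's English description precedes it below -/
import Mathlib

section
/- Let d ≥ 3 and N ≥ 1. There exists β₀′ < ∞ such that for every β > β₀′ there exist a constant C = C(β,d,N) > 0 and L₀ < ∞ such that for every even integer L > L₀ and every z ∈ T_L with ‖z‖_∞ < L/8 one has ⟨φ_o · φ_z⟩_{L,N,β} ≥ C. -/
open MeasureTheory Metric
open scoped RealInnerProductSpace BigOperators

/-- Vertices of the torus `(ℤ/Lℤ)^d`. -/
abbrev TorusPt (d L : ℕ) := Fin d → ZMod L

/-- Nearest-neighbour adjacency on the torus: `x` and `y` differ by `±1 (mod L)`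
in exactly one coordinate. -/
def torusAdj {d L : ℕ} (x y : TorusPt d L) : Prop :=
  ∃ j : Fin d, y = Function.update x j (x j + 1) ∨ y = Function.update x j (x j - 1)

instance {d L : ℕ} (x y : TorusPt d L) : Decidable (torusAdj x y) := by
  unfold torusAdj; infer_instance

/-- The unit sphere `S^{N-1} ⊂ ℝ^N`. -/
abbrev SpinSphere (N : ℕ) := sphere (0 : EuclideanSpace ℝ (Fin N)) 1

/-- A spin configuration on the torus. -/
abbrev SpinCfg (d L N : ℕ) := TorusPt d L → SpinSphere N

/-- The uniform probability measure on the unit sphere `S^{N-1}`. -/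
noncomputable def sphereUniform (N : ℕ) : Measure (SpinSphere N) :=
  ((volume : Measure (EuclideanSpace ℝ (Fin N))).toSphere Set.univ)⁻¹ •
    (volume : Measure (EuclideanSpace ℝ (Fin N))).toSphere

/-- The product over vertices of the uniform probability measures on the sphere. -/
noncomputable def spinMeasure (d L N : ℕ) [NeZero L] : Measure (SpinCfg d L N) :=
  Measure.pi fun _ : TorusPt d L => sphereUniform N

/-- The Hamiltonian `H(φ) = -∑_{{x,y} edge} φ_x · φ_y`; every unordered
nearest-neighbour edge appears exactly twice in the double sum below. -/
noncomputable def hamiltonian {d L N : ℕ} [NeZero L] (φ : SpinCfg d L N) : ℝ :=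
  -(1 / 2) * ∑ x : TorusPt d L, ∑ y : TorusPt d L,
    if torusAdj x y then
      ⟪(φ x : EuclideanSpace ℝ (Fin N)), (φ y : EuclideanSpace ℝ (Fin N))⟫
    else 0

/-- The Gibbs expectation `⟨f⟩_{L,N,β}`. -/
noncomputable def gibbsExp (d L N : ℕ) [NeZero L] (β : ℝ) (f : SpinCfg d L N → ℝ) : ℝ :=
  (∫ φ, Real.exp (-β * hamiltonian φ) ∂(spinMeasure d L N))⁻¹ *
    ∫ φ, f φ * Real.exp (-β * hamiltonian φ) ∂(spinMeasure d L N)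

/-- The spin-spin correlation `⟨φ_x ⬝ φ_y⟩_{L,N,β}`. -/
noncomputable def corrDot (d L N : ℕ) [NeZero L] (β : ℝ) (x y : TorusPt d L) : ℝ :=
  gibbsExp d L N β fun φ =>
    ⟪(φ x : EuclideanSpace ℝ (Fin N)), (φ y : EuclideanSpace ℝ (Fin N))⟫

/-- The correlation `⟨φ_x^1 φ_y^1⟩_{L,N,β}` of first components. -/
noncomputable def corrOne (d L N : ℕ) [NeZero L] [NeZero N] (β : ℝ) (x y : TorusPt d L) : ℝ :=
  gibbsExp d L N β fun φ =>
    (φ x : EuclideanSpace ℝ (Fin N)) 0 * (φ y : EuclideanSpace ℝ (Fin N)) 0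

/-- The origin of the torus. -/
def torusOrigin (d L : ℕ) : TorusPt d L := fun _ => 0

/-- The point `n • e_i` on the `i`-th cartesian axis. -/
def axisPt (d L : ℕ) (i : Fin d) (n : ℕ) : TorusPt d L :=
  fun k => if k = i then (n : ZMod L) else 0

/-- The sup torus norm `‖z‖_∞ = max_i min(z_i, L - z_i)`. -/
def tnormInf {d L : ℕ} (z : TorusPt d L) : ℕ :=
  Finset.univ.sup fun i : Fin d => min (z i).val (L - (z i).val)

/-!
Up to a constant, `-βH` is minus the energy `(β/4) ∑ ‖φ y - φ x‖²` over ordered pairs of neighbours.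
Reflections through hyperplanes between sites are positive for this energy, by a Cauchy–Schwarz
inequality for the Gaussian kernel, and every edge of an even torus is cut by one of them. Hence
shifting the gradients by a field `h` never increases the partition function (Gaussian domination),
and the second-order expansion at `h = 0` bounds the variance of every linear functional of the
gradients (the infrared bound). Choosing `h` to be a unit flow from `x` to `y` gives
`⟨‖φ y - φ x‖²⟩ ≤ C / β`, where `C` is the energy of the flow. For `d ≥ 3` this energy is bounded
uniformly in `L`, `x` and `y`: spread the unit mass from `x` over growing boxes, to the uniform
distribution, and gather it again at `y`. Finally `φ x ⬝ φ y = 1 - ‖φ y - φ x‖² / 2` on the sphere.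
-/

namespace SpinON

theorem sq_integral_mul_le {Ω : Type*} [MeasurableSpace Ω] {μ : Measure Ω} {f g : Ω → ℝ}
    (hff : Integrable (fun x => f x * f x) μ) (hgg : Integrable (fun x => g x * g x) μ)
    (hfg : Integrable (fun x => f x * g x) μ) :
    (∫ x, f x * g x ∂μ) ^ 2 ≤ (∫ x, f x * f x ∂μ) * ∫ x, g x * g x ∂μ := by
  have quadratic_nonneg (t : ℝ) : 0 ≤ (∫ x, f x * f x ∂μ) * (t * t) +
      2 * (∫ x, f x * g x ∂μ) * t + ∫ x, g x * g x ∂μ := by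
    have expand : ∫ x, (t * f x + g x) ^ 2 ∂μ = (∫ x, f x * f x ∂μ) * (t * t) +
        2 * (∫ x, f x * g x ∂μ) * t + ∫ x, g x * g x ∂μ := by
      calc
        _ = ∫ x, (f x * f x * (t * t) + f x * g x * (2 * t)) + g x * g x ∂μ := by
          congr 1 with x
          ring
        _ = _ := by
          have hfft := hff.mul_const (t * t)
          have hfgt := hfg.mul_const (2 * t)
          rw [integral_add (by exact hfft.add hfgt) hgg, integral_add hfft hfgt,
            integral_mul_const, integral_mul_const]
          ring
    exact expand ▸ integral_nonneg fun x => sq_nonneg _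
  have := discrim_le_zero quadratic_nonneg
  rw [discrim] at this
  linarith

section GaussianKernel

variable {H : Type*} [NormedAddCommGroup H]
variable {Ω₁ Ω₂ : Type*} [MeasurableSpace Ω₁] [MeasurableSpace Ω₂]

/-- The measure `F μ`, pushed forward to `H` by `a` and convolved with a Gaussian, as a function
on `H`. -/
noncomputable def gaussianSmoothing (μ : Measure Ω₁) (F : Ω₁ → ℝ) (a : Ω₁ → H) (s : H) : ℝ :=
  ∫ x, F x * Real.exp (-2 * ‖a x - s‖ ^ 2) ∂μ

variable {μ : Measure Ω₁} {ν : Measure Ω₂} {F : Ω₁ → ℝ} {G : Ω₂ → ℝ}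
  {a : Ω₁ → H} {b : Ω₂ → H}

theorem gaussianSmoothing_mul [SFinite μ] [SFinite ν] (s : H) :
    gaussianSmoothing μ F a s * gaussianSmoothing ν G b s =
      ∫ q, F q.1 * Real.exp (-2 * ‖a q.1 - s‖ ^ 2) *
        (G q.2 * Real.exp (-2 * ‖b q.2 - s‖ ^ 2)) ∂μ.prod ν :=
  (integral_prod_mul _ _).symm

variable [InnerProductSpace ℝ H]

theorem two_mul_norm_sub_sq_add_two_mul_norm_sub_sq (a b s : H) :
    2 * ‖a - s‖ ^ 2 + 2 * ‖b - s‖ ^ 2 = ‖a - b‖ ^ 2 + 4 * ‖s - (2⁻¹ : ℝ) • (a + b)‖ ^ 2 := by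
  rw [sub_eq_add_neg s]
  simp only [norm_sub_sq_real, norm_add_sq_real, norm_neg, norm_smul, Real.norm_eq_abs,
    inner_neg_right, inner_smul_right, inner_add_right, real_inner_comm s]
  rw [abs_of_pos (by norm_num : (0 : ℝ) < 2⁻¹), mul_pow, norm_add_sq_real]
  ring

variable [FiniteDimensional ℝ H] [MeasurableSpace H] [BorelSpace H]

theorem integrable_exp_neg_mul_norm_sq {c : ℝ} (hc : 0 < c) :
    Integrable fun s : H => Real.exp (-c * ‖s‖ ^ 2) := by
  refine Integrable.of_integral_ne_zero ?_
  rw [GaussianFourier.integral_rexp_neg_mul_sq_norm hc]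
  positivity

theorem integral_exp_mul_exp_eq (a b : H) :
    ∫ s, Real.exp (-2 * ‖a - s‖ ^ 2) * Real.exp (-2 * ‖b - s‖ ^ 2) =
      Real.exp (-‖a - b‖ ^ 2) * ∫ s : H, Real.exp (-4 * ‖s‖ ^ 2) := by
  rw [← integral_sub_right_eq_self (fun s : H => Real.exp (-4 * ‖s‖ ^ 2)) ((2⁻¹ : ℝ) • (a + b)),
    ← integral_const_mul]
  congr 1 with s
  rw [← Real.exp_add, ← Real.exp_add]
  congr 1
  linarith [two_mul_norm_sub_sq_add_two_mul_norm_sub_sq a b s]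

theorem integrable_exp_mul_exp (a b : H) :
    Integrable fun s => Real.exp (-2 * ‖a - s‖ ^ 2) * Real.exp (-2 * ‖b - s‖ ^ 2) := by
  refine Integrable.of_integral_ne_zero ?_
  rw [integral_exp_mul_exp_eq]
  exact mul_ne_zero (Real.exp_ne_zero _)
    (integral_exp_pos (integrable_exp_neg_mul_norm_sq four_pos)).ne'

theorem integrable_mul_gaussian_mul_gaussian (hF : Integrable F μ) (hG : Integrable G ν)
    (ha : Measurable a) (hb : Measurable b) :
    Integrable (fun q : (Ω₁ × Ω₂) × H => F q.1.1 * Real.exp (-2 * ‖a q.1.1 - q.2‖ ^ 2) *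
      (G q.1.2 * Real.exp (-2 * ‖b q.1.2 - q.2‖ ^ 2))) ((μ.prod ν).prod volume) := by
  have factor (x : Ω₁) (y : Ω₂) (s : H) :
      F x * Real.exp (-2 * ‖a x - s‖ ^ 2) * (G y * Real.exp (-2 * ‖b y - s‖ ^ 2)) =
        F x * G y * (Real.exp (-2 * ‖a x - s‖ ^ 2) * Real.exp (-2 * ‖b y - s‖ ^ 2)) := by ring
  simp only [factor]
  have hFG : Integrable (fun q : Ω₁ × Ω₂ => F q.1 * G q.2) (μ.prod ν) := hF.mul_prod hG
  refine (integrable_prod_iff ?_).2 ⟨.of_forall fun q => ?_, ?_⟩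
  · have kernel : Measurable fun q : (Ω₁ × Ω₂) × H =>
        Real.exp (-2 * ‖a q.1.1 - q.2‖ ^ 2) * Real.exp (-2 * ‖b q.1.2 - q.2‖ ^ 2) := by fun_prop
    exact hFG.aestronglyMeasurable.comp_fst.mul kernel.aestronglyMeasurable
  · exact (integrable_exp_mul_exp (a q.1) (b q.2)).const_mul (F q.1 * G q.2)
  · simp only [norm_mul, integral_const_mul, Real.norm_of_nonneg (Real.exp_pos _).le,
      integral_exp_mul_exp_eq]
    refine (hFG.norm.mul_const (∫ s : H, Real.exp (-4 * ‖s‖ ^ 2))).mono' ?_ (.of_forall fun q => ?_)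
    · have kernel : Measurable fun q : Ω₁ × Ω₂ =>
          Real.exp (-‖a q.1 - b q.2‖ ^ 2) * ∫ s : H, Real.exp (-4 * ‖s‖ ^ 2) := by fun_prop
      exact (hF.norm.mul_prod hG.norm).aestronglyMeasurable.mul kernel.aestronglyMeasurable
    · have hc : 0 ≤ ∫ s : H, Real.exp (-4 * ‖s‖ ^ 2) := integral_nonneg fun _ => (Real.exp_pos _).le
      rw [Real.norm_of_nonneg (by positivity), norm_mul]
      gcongr
      exact mul_le_of_le_one_left hc (Real.exp_le_one_iff.2 (by simp))

variable [SFinite μ] [SFinite ν]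

theorem integrable_gaussianSmoothing_mul (hF : Integrable F μ) (hG : Integrable G ν)
    (ha : Measurable a) (hb : Measurable b) :
    Integrable fun s => gaussianSmoothing μ F a s * gaussianSmoothing ν G b s := by
  simp only [gaussianSmoothing_mul]
  exact (integrable_mul_gaussian_mul_gaussian hF hG ha hb).integral_prod_right

theorem integral_gaussianSmoothing_mul (hF : Integrable F μ) (hG : Integrable G ν)
    (ha : Measurable a) (hb : Measurable b) :
    ∫ s, gaussianSmoothing μ F a s * gaussianSmoothing ν G b s =
      (∫ q, F q.1 * G q.2 * Real.exp (-‖a q.1 - b q.2‖ ^ 2) ∂μ.prod ν) *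
        ∫ s : H, Real.exp (-4 * ‖s‖ ^ 2) := by
  simp only [gaussianSmoothing_mul]
  rw [← integral_integral_swap (integrable_mul_gaussian_mul_gaussian hF hG ha hb),
    ← integral_mul_const]
  congr 1 with q
  simp only [mul_mul_mul_comm (F q.1), integral_const_mul, integral_exp_mul_exp_eq, mul_assoc]

/-- The Gaussian kernel is positive definite, being a Gaussian convolved with itself; this is the
resulting Cauchy–Schwarz inequality. -/
theorem sq_integral_gaussianKernel_le (hF : Integrable F μ) (hG : Integrable G ν)
    (ha : Measurable a) (hb : Measurable b) :
    (∫ q, F q.1 * G q.2 * Real.exp (-‖a q.1 - b q.2‖ ^ 2) ∂μ.prod ν) ^ 2 ≤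
      (∫ q, F q.1 * F q.2 * Real.exp (-‖a q.1 - a q.2‖ ^ 2) ∂μ.prod μ) *
        ∫ q, G q.1 * G q.2 * Real.exp (-‖b q.1 - b q.2‖ ^ 2) ∂ν.prod ν := by
  have hc : 0 < ∫ s : H, Real.exp (-4 * ‖s‖ ^ 2) :=
    integral_exp_pos (integrable_exp_neg_mul_norm_sq four_pos)
  have cauchySchwarz := sq_integral_mul_le (integrable_gaussianSmoothing_mul hF hF ha ha)
    (integrable_gaussianSmoothing_mul hG hG hb hb) (integrable_gaussianSmoothing_mul hF hG ha hb)
  rw [integral_gaussianSmoothing_mul hF hG ha hb, integral_gaussianSmoothing_mul hF hF ha ha,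
    integral_gaussianSmoothing_mul hG hG hb hb, mul_mul_mul_comm, mul_pow, sq (∫ s : H, _)]
    at cauchySchwarz
  exact le_of_mul_le_mul_right cauchySchwarz (mul_pos hc hc)

end GaussianKernel

section Model

variable {V E : Type*} [Fintype V] [NormedAddCommGroup E]

/-- The energy `∑ w(x, y) ‖φ y - φ x - h(x, y)‖²` of a configuration `φ` under the pair weights `w`
and the shift field `h`, both indexed by ordered pairs of sites. -/
noncomputable def action (w : V × V → ℝ) (h : V × V → E) (φ : V → E) : ℝ :=
  ∑ p, w p * ‖φ p.2 - φ p.1 - h p‖ ^ 2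

theorem action_nonneg {w : V × V → ℝ} (hw : 0 ≤ w) (h : V × V → E) (φ : V → E) :
    0 ≤ action w h φ :=
  Finset.sum_nonneg fun p _ => mul_nonneg (hw p) (sq_nonneg _)

theorem continuous_exp_neg_action (w : V × V → ℝ) :
    Continuous fun q : (V × V → E) × (V → E) => Real.exp (-action w q.1 q.2) := by
  unfold action
  fun_prop

theorem exp_neg_action_le_one {w : V × V → ℝ} (hw : 0 ≤ w) (h : V × V → E) (φ : V → E) :
    Real.exp (-action w h φ) ≤ 1 :=
  Real.exp_le_one_iff.2 (neg_nonpos.2 (action_nonneg hw h φ))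

variable [MeasurableSpace E]

/-- The partition function of the spin system with single-spin measure `μ`, pair weights `w` and
shift field `h`. -/
noncomputable def partitionFunction (μ : Measure E) (w : V × V → ℝ) (h : V × V → E) : ℝ :=
  ∫ φ, Real.exp (-action w h φ) ∂Measure.pi fun _ : V => μ

variable [SecondCountableTopology E] [BorelSpace E] (μ : Measure E) [IsProbabilityMeasure μ]
  {w : V × V → ℝ}

theorem integrable_exp_neg_action (hw : 0 ≤ w) (h : V × V → E) :
    Integrable (fun φ => Real.exp (-action w h φ)) (Measure.pi fun _ : V => μ) := by
  refine .of_bound (continuous_exp_neg_action w).along_snd.aestronglyMeasurable 1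
    (.of_forall fun φ => ?_)
  rw [Real.norm_of_nonneg (Real.exp_pos _).le]
  exact exp_neg_action_le_one hw h φ

theorem partitionFunction_pos (hw : 0 ≤ w) (h : V × V → E) : 0 < partitionFunction μ w h :=
  integral_exp_pos (integrable_exp_neg_action μ hw h)

theorem partitionFunction_le_one (hw : 0 ≤ w) (h : V × V → E) : partitionFunction μ w h ≤ 1 := by
  simpa [partitionFunction] using integral_mono (integrable_exp_neg_action μ hw h)
    (integrable_const 1) (exp_neg_action_le_one hw h)

theorem continuous_partitionFunction (hw : 0 ≤ w) :
    Continuous fun h : V × V → E => partitionFunction μ w h := by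
  refine continuous_of_dominated (bound := fun _ => 1)
    (fun h => (integrable_exp_neg_action μ hw h).aestronglyMeasurable)
    (fun h => .of_forall fun φ => ?_) (integrable_const 1) (.of_forall fun φ => ?_)
  · rw [Real.norm_of_nonneg (Real.exp_pos _).le]
    exact exp_neg_action_le_one hw h φ
  · exact (continuous_exp_neg_action w).along_fst

end Model

/-- A reflection of the vertex set `V`, exchanging a half `left` with its complement, which
preserves the weights `w` and for which a positive weight across the cut only joins mirror
images. -/
structure Reflection {V : Type*} (w : V × V → ℝ) where
  mirror : V → V
  left : Finset V
  mirror_involutive : Function.Involutive mirror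
  mirror_mem_left : ∀ x, mirror x ∈ left ↔ x ∉ left
  weight_mirror : ∀ x y, w (mirror x, mirror y) = w (x, y)
  eq_mirror_of_cross : ∀ x ∈ left, ∀ y ∉ left, w (x, y) ≠ 0 → y = mirror x

namespace Reflection

variable {V E : Type*} {w : V × V → ℝ} (R : Reflection w)

/-- The two sites of `p` lie on different sides of the cut. -/
def Separates (p : V × V) : Prop := p.1 ∈ R.left ↔ p.2 ∉ R.left

theorem mirror_notMem_left {x : V} (hx : x ∈ R.left) : R.mirror x ∉ R.left := fun h =>
  (R.mirror_mem_left x).1 h hx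

open scoped Classical in
/-- Two copies of the left half make up the vertex set, the second one through the mirror. -/
noncomputable def halves : R.left ⊕ R.left ≃ V :=
  (Equiv.sumCongr (.refl _) (R.mirror_involutive.toPerm.subtypeEquiv fun x => by
    rw [Function.Involutive.coe_toPerm, R.mirror_mem_left, not_not])).trans
    (Equiv.sumCompl (· ∈ R.left))

@[simp]
theorem halves_inl (x : R.left) : R.halves (.inl x) = x := rfl

@[simp]
theorem halves_inr (x : R.left) : R.halves (.inr x) = R.mirror x := rfl

theorem weight_mirror_right_eq_zero {x y : R.left} (h : x ≠ y) : w (x, R.mirror y) = 0 := by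
  by_contra hw
  exact h (Subtype.ext (R.mirror_involutive.injective
    (R.eq_mirror_of_cross x x.2 _ (R.mirror_notMem_left y.2) hw)).symm)

theorem weight_mirror_left (x y : V) : w (R.mirror x, y) = w (x, R.mirror y) := by
  rw [← R.weight_mirror, R.mirror_involutive]

/-- The mirror image of a field on ordered pairs. -/
def reflect (h : V × V → E) : V × V → E := h ∘ Prod.map R.mirror R.mirror

open scoped Classical in
/-- The mirror-symmetric field which agrees with `h` inside the left half and vanishes across the
cut. -/
noncomputable def symmetrize [Zero E] (h : V × V → E) (p : V × V) : E :=
  if p.1 ∈ R.left ∧ p.2 ∈ R.left then h p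
  else if p.1 ∉ R.left ∧ p.2 ∉ R.left then R.reflect h p
  else 0

section Symmetrize

variable [Zero E] (h : V × V → E) (x y : R.left)

theorem symmetrize_left : R.symmetrize h (x, y) = h (x, y) := by
  simp [symmetrize]

theorem symmetrize_mirror : R.symmetrize h (R.mirror x, R.mirror y) = h (x, y) := by
  simp [symmetrize, reflect, R.mirror_notMem_left, R.mirror_involutive _]

theorem symmetrize_mirror_right : R.symmetrize h (x, R.mirror y) = 0 := by
  simp [symmetrize, R.mirror_notMem_left]

theorem symmetrize_mirror_left : R.symmetrize h (R.mirror x, y) = 0 := by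
  simp [symmetrize, R.mirror_notMem_left]

end Symmetrize

section Sums

variable [Fintype V]

theorem sum_eq_sum_left (g : V × V → ℝ) :
    ∑ p, g p = ∑ p : R.left × R.left, (g (p.1, p.2) + g (R.mirror p.1, R.mirror p.2)) +
      ∑ p : R.left × R.left, (g (p.1, R.mirror p.2) + g (R.mirror p.1, p.2)) := by
  rw [← (R.halves.prodCongr R.halves).sum_comp g]
  simp only [Fintype.sum_prod_type, Fintype.sum_sum_type, Equiv.prodCongr_apply, Prod.map_apply,
    halves_inl, halves_inr, Finset.sum_add_distrib]
  ring

theorem sum_eq_sum_left_of_diagonal {g : V × V → ℝ}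
    (hg : ∀ x y : R.left, x ≠ y → g (x, R.mirror y) = 0 ∧ g (R.mirror x, y) = 0) :
    ∑ p, g p = ∑ p : R.left × R.left, g (p.1, p.2) +
      ∑ p : R.left × R.left, g (R.mirror p.1, R.mirror p.2) +
      ∑ x : R.left, (g (x, R.mirror x) + g (R.mirror x, x)) := by
  rw [R.sum_eq_sum_left, Finset.sum_add_distrib]
  congr 1
  rw [Fintype.sum_prod_type]
  refine Finset.sum_congr rfl fun x _ => Fintype.sum_eq_single x fun y hy => ?_
  simp only [hg x y hy.symm, add_zero]

end Sums

section FieldNorm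

variable [NormedAddCommGroup E]

theorem norm_sq_le_sum_cross (h : V × V → E) {p : V × V} (hp : R.Separates p) :
    ‖h p‖ ^ 2 ≤ ∑ p : R.left × R.left,
      (‖h (p.1, R.mirror p.2)‖ ^ 2 + ‖h (R.mirror p.1, p.2)‖ ^ 2) := by
  have single_le (q : R.left × R.left) := Finset.single_le_sum
    (f := fun p : R.left × R.left =>
      ‖h (p.1, R.mirror p.2)‖ ^ 2 + ‖h (R.mirror p.1, p.2)‖ ^ 2)
    (fun p _ => by positivity) (Finset.mem_univ q)
  by_cases h1 : p.1 ∈ R.left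
  · refine le_trans ?_ (single_le (⟨p.1, h1⟩, ⟨R.mirror p.2, (R.mirror_mem_left _).2 (hp.1 h1)⟩))
    simp [R.mirror_involutive _]
  · have h2 : p.2 ∈ R.left := not_not.1 (hp.not.1 h1)
    refine le_trans ?_ (single_le (⟨R.mirror p.1, (R.mirror_mem_left _).2 h1⟩, ⟨p.2, h2⟩))
    simp [R.mirror_involutive _]

variable [Fintype V]

theorem sum_norm_sq_symmetrize (h : V × V → E) :
    ∑ p, ‖R.symmetrize h p‖ ^ 2 = 2 * ∑ p : R.left × R.left, ‖h (p.1, p.2)‖ ^ 2 := by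
  simp only [R.sum_eq_sum_left, symmetrize_left, symmetrize_mirror, symmetrize_mirror_right,
    symmetrize_mirror_left, norm_zero, Finset.mul_sum, two_mul]
  simp

theorem sum_norm_sq_symmetrize_add_le (h : V × V → E) {p : V × V} (hp : R.Separates p) :
    ∑ q, ‖R.symmetrize h q‖ ^ 2 + ∑ q, ‖R.symmetrize (R.reflect h) q‖ ^ 2 + 2 * ‖h p‖ ^ 2 ≤
      2 * ∑ q, ‖h q‖ ^ 2 := by
  rw [sum_norm_sq_symmetrize, sum_norm_sq_symmetrize, R.sum_eq_sum_left fun q => ‖h q‖ ^ 2,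
    Finset.sum_add_distrib]
  simp only [reflect, Function.comp_apply, Prod.map_apply]
  linarith [R.norm_sq_le_sum_cross h hp]

end FieldNorm

section Glue

variable [MeasurableSpace E]

/-- The configuration on `V` made of one configuration on each half. -/
noncomputable def glue : (R.left → E) × (R.left → E) ≃ᵐ (V → E) :=
  (MeasurableEquiv.sumPiEquivProdPi fun _ => E).symm.trans
    (MeasurableEquiv.piCongrLeft (fun _ => E) R.halves)

variable (q : (R.left → E) × (R.left → E)) (x : R.left)

theorem glue_left : R.glue q x = q.1 x :=
  Equiv.piCongrLeft_sumInl (fun _ => E) R.halves q.1 q.2 x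

theorem glue_mirror : R.glue q (R.mirror x) = q.2 x :=
  Equiv.piCongrLeft_sumInr (fun _ => E) R.halves q.1 q.2 x

theorem measurePreserving_glue [Fintype V] (μ : Measure E) [SigmaFinite μ] :
    MeasurePreserving R.glue
      ((Measure.pi fun _ : R.left => μ).prod (Measure.pi fun _ : R.left => μ))
      (Measure.pi fun _ : V => μ) :=
  (measurePreserving_sumPiEquivProdPi_symm fun _ => μ).trans
    (measurePreserving_piCongrLeft (fun _ => μ) R.halves)

end Glue

section ReflectionPositivity

variable [NormedAddCommGroup E]

/-- The action of the left half, in which `h` enters only through the pairs inside that half. -/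
noncomputable def leftAction (h : V × V → E) : (R.left → E) → ℝ :=
  action (fun p => w (p.1, p.2)) fun p => h (p.1, p.2)

variable [InnerProductSpace ℝ E]

/-- The feature map through which the two halves interact: if `φ` and `χ` are the configurations on
the left half and, seen through the mirror, on the right half, then the action across the cut is
`‖interface h φ - interface 0 χ‖²`. The Boolean separates the two orientations of a pair. -/
noncomputable def interface (h : V × V → E) (φ : R.left → E) :
    PiLp 2 fun _ : R.left × Bool => E :=
  WithLp.toLp 2 fun i => √(w (i.1, R.mirror i.1)) •
    (φ i.1 + bif i.2 then h (i.1, R.mirror i.1) else -h (R.mirror i.1, i.1))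

theorem interface_sub_interface (h : V × V → E) (φ χ : R.left → E) :
    R.interface h φ - R.interface h χ = R.interface 0 φ - R.interface 0 χ := by
  ext i
  simp [interface, ← smul_sub]

theorem norm_sq_interface_sub (hw : 0 ≤ w) (h : V × V → E) (φ χ : R.left → E) :
    ‖R.interface h φ - R.interface 0 χ‖ ^ 2 = ∑ x : R.left,
      (w (x, R.mirror x) * ‖χ x - φ x - h (x, R.mirror x)‖ ^ 2 +
        w (R.mirror x, x) * ‖φ x - χ x - h (R.mirror x, x)‖ ^ 2) := by
  rw [PiLp.norm_sq_eq_of_L2, Fintype.sum_prod_type]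
  refine Finset.sum_congr rfl fun x _ => ?_
  simp only [Fintype.sum_bool, interface, PiLp.sub_apply, ← smul_sub, norm_smul, mul_pow,
    Real.norm_eq_abs, sq_abs, Real.sq_sqrt (hw _), R.weight_mirror_left x, cond_true, cond_false,
    Pi.zero_apply, neg_zero, add_zero]
  rw [← norm_neg (χ x - φ x - _)]
  congr 4 <;> abel

variable [Fintype V] [MeasurableSpace E]

theorem action_glue (hw : 0 ≤ w) (h : V × V → E) (q : (R.left → E) × (R.left → E)) :
    action w h (R.glue q) = R.leftAction h q.1 + R.leftAction (R.reflect h) q.2 +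
      ‖R.interface h q.1 - R.interface 0 q.2‖ ^ 2 := by
  rw [action, R.sum_eq_sum_left_of_diagonal fun x y hxy => ?_, R.norm_sq_interface_sub hw]
  · simp only [glue_left, glue_mirror, R.weight_mirror, leftAction, action, reflect,
      Function.comp_apply, Prod.map_apply]
  · simp [R.weight_mirror_left, R.weight_mirror_right_eq_zero hxy]

theorem exp_neg_action_glue (hw : 0 ≤ w) (h : V × V → E) (q : (R.left → E) × (R.left → E)) :
    Real.exp (-action w h (R.glue q)) =
      Real.exp (-R.leftAction h q.1) * Real.exp (-R.leftAction (R.reflect h) q.2) *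
        Real.exp (-‖R.interface h q.1 - R.interface 0 q.2‖ ^ 2) := by
  rw [R.action_glue hw, ← Real.exp_add, ← Real.exp_add]
  ring_nf

variable (μ : Measure E)

theorem partitionFunction_eq_integral_halves [SigmaFinite μ] (hw : 0 ≤ w) (h : V × V → E) :
    partitionFunction μ w h = ∫ q, Real.exp (-R.leftAction h q.1) *
      Real.exp (-R.leftAction (R.reflect h) q.2) *
        Real.exp (-‖R.interface h q.1 - R.interface 0 q.2‖ ^ 2)
      ∂(Measure.pi fun _ : R.left => μ).prod (Measure.pi fun _ : R.left => μ) := by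
  rw [partitionFunction, ← (R.measurePreserving_glue μ).integral_comp' (g := fun φ => _)]
  simp only [R.exp_neg_action_glue hw]

theorem partitionFunction_symmetrize [SigmaFinite μ] (hw : 0 ≤ w) (h : V × V → E) :
    partitionFunction μ w (R.symmetrize h) = ∫ q, Real.exp (-R.leftAction h q.1) *
      Real.exp (-R.leftAction h q.2) * Real.exp (-‖R.interface 0 q.1 - R.interface 0 q.2‖ ^ 2)
      ∂(Measure.pi fun _ : R.left => μ).prod (Measure.pi fun _ : R.left => μ) := by
  have leftAction_eq : R.leftAction (R.symmetrize h) = R.leftAction h := by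
    unfold leftAction
    congr 1 with p
    exact R.symmetrize_left h p.1 p.2
  have leftAction_reflect_eq : R.leftAction (R.reflect (R.symmetrize h)) = R.leftAction h := by
    unfold leftAction
    congr 1 with p
    exact R.symmetrize_mirror h p.1 p.2
  have interface_eq : R.interface (R.symmetrize h) = R.interface 0 := by
    ext φ i
    simp [interface, symmetrize_mirror_right, symmetrize_mirror_left]
  rw [R.partitionFunction_eq_integral_halves μ hw, leftAction_eq, leftAction_reflect_eq,
    interface_eq]

variable [FiniteDimensional ℝ E] [BorelSpace E] [IsProbabilityMeasure μ]

theorem partitionFunction_sq_le (hw : 0 ≤ w) (h : V × V → E) :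
    partitionFunction μ w h ^ 2 ≤ partitionFunction μ w (R.symmetrize h) *
      partitionFunction μ w (R.symmetrize (R.reflect h)) := by
  have weight_integrable (k : V × V → E) : Integrable (fun φ => Real.exp (-R.leftAction k φ))
      (Measure.pi fun _ : R.left => μ) :=
    integrable_exp_neg_action (w := fun p : R.left × R.left => w (p.1, p.2)) μ (fun _ => hw _) _
  have interface_measurable (k : V × V → E) : Measurable (R.interface k) :=
    Continuous.measurable (by unfold interface; fun_prop)
  have cauchySchwarz := sq_integral_gaussianKernel_le (weight_integrable h)
    (weight_integrable (R.reflect h)) (interface_measurable h) (interface_measurable 0)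
  simp only [R.interface_sub_interface h] at cauchySchwarz
  rwa [R.partitionFunction_eq_integral_halves μ hw, R.partitionFunction_symmetrize μ hw,
    R.partitionFunction_symmetrize μ hw]

end ReflectionPositivity

end Reflection

section GaussianDomination

theorem norm_sq_le_sum_norm_sq {ι E : Type*} [Fintype ι] [NormedAddCommGroup E] (h : ι → E) :
    ‖h‖ ^ 2 ≤ ∑ p, ‖h p‖ ^ 2 := by
  refine (Real.le_sqrt (norm_nonneg h) (by positivity)).1 ?_
  refine (pi_norm_le_iff_of_nonneg (Real.sqrt_nonneg _)).2 fun p => Real.le_sqrt_of_sq_le ?_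
  exact Finset.single_le_sum (f := fun p => ‖h p‖ ^ 2) (fun p _ => by positivity)
    (Finset.mem_univ p)

variable {V E : Type*} [Fintype V] [NormedAddCommGroup E] [MeasurableSpace E] (μ : Measure E)
  (w : V × V → ℝ)

/-- The partition function with a Gaussian penalty on the field, which makes it attain its
maximum. -/
noncomputable def penalizedPartition (δ : ℝ) (h : V × V → E) : ℝ :=
  partitionFunction μ w h * Real.exp (-δ * ∑ p, ‖h p‖ ^ 2)

variable {w} [BorelSpace E] [IsProbabilityMeasure μ] {δ : ℝ}

section SecondCountable

variable [SecondCountableTopology E]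

theorem penalizedPartition_pos (hw : 0 ≤ w) (h : V × V → E) : 0 < penalizedPartition μ w δ h :=
  mul_pos (partitionFunction_pos μ hw h) (Real.exp_pos _)

theorem continuous_penalizedPartition (hw : 0 ≤ w) :
    Continuous fun h : V × V → E => penalizedPartition μ w δ h :=
  (continuous_partitionFunction μ hw).mul (by fun_prop)

theorem penalizedPartition_le_exp_neg_norm_sq (hw : 0 ≤ w) (hδ : 0 < δ) (h : V × V → E) :
    penalizedPartition μ w δ h ≤ Real.exp (-(δ * ‖h‖ ^ 2)) := by
  refine (mul_le_of_le_one_left (Real.exp_pos _).le (partitionFunction_le_one μ hw h)).trans ?_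
  rw [neg_mul]
  gcongr
  exact norm_sq_le_sum_norm_sq h

end SecondCountable

theorem exists_forall_penalizedPartition_le [ProperSpace E] (hw : 0 ≤ w) (hδ : 0 < δ) :
    ∃ h : V × V → E, ∀ k, penalizedPartition μ w δ k ≤ penalizedPartition μ w δ h := by
  refine (continuous_penalizedPartition μ hw).exists_forall_ge' 0 ?_
  have decay : Filter.Tendsto (fun h : V × V → E => Real.exp (-(δ * ‖h‖ ^ 2)))
      (Filter.cocompact _) (nhds 0) :=
    Real.tendsto_exp_neg_atTop_nhds_zero.comp (((Filter.tendsto_pow_atTop two_ne_zero).comp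
      tendsto_norm_cocompact_atTop).const_mul_atTop hδ)
  filter_upwards [decay.eventually_lt_const (penalizedPartition_pos μ hw 0)] with h h_lt
  exact (penalizedPartition_le_exp_neg_norm_sq μ hw hδ h).trans h_lt.le

variable [InnerProductSpace ℝ E] [FiniteDimensional ℝ E]

theorem penalizedPartition_sq_mul_exp_le (hw : 0 ≤ w) (hδ : 0 ≤ δ) (h : V × V → E)
    (R : Reflection w) {p : V × V} (hp : R.Separates p) :
    penalizedPartition μ w δ h ^ 2 * Real.exp (2 * δ * ‖h p‖ ^ 2) ≤
      penalizedPartition μ w δ (R.symmetrize h) *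
        penalizedPartition μ w δ (R.symmetrize (R.reflect h)) := by
  unfold penalizedPartition
  rw [mul_pow, mul_assoc, mul_mul_mul_comm, ← Real.exp_nat_mul, ← Real.exp_add, ← Real.exp_add]
  refine mul_le_mul (R.partitionFunction_sq_le μ hw h) (Real.exp_le_exp.2 ?_) (Real.exp_pos _).le
    (mul_nonneg (partitionFunction_pos μ hw _).le (partitionFunction_pos μ hw _).le)
  have := mul_le_mul_of_nonneg_left (R.sum_norm_sq_symmetrize_add_le h hp) hδ
  push_cast
  linarith

theorem eq_zero_of_forall_penalizedPartition_le (hw : 0 ≤ w) (hδ : 0 < δ) {h : V × V → E}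
    (hmax : ∀ k, penalizedPartition μ w δ k ≤ penalizedPartition μ w δ h)
    (R : Reflection w) {p : V × V} (hp : R.Separates p) : h p = 0 := by
  have hpos := penalizedPartition_pos (δ := δ) μ hw h
  have exp_le_one : Real.exp (2 * δ * ‖h p‖ ^ 2) ≤ 1 := by
    refine le_of_mul_le_mul_left ?_ (pow_pos hpos 2)
    calc
      _ ≤ _ := penalizedPartition_sq_mul_exp_le μ hw hδ.le h R hp
      _ ≤ penalizedPartition μ w δ h * penalizedPartition μ w δ h :=
        mul_le_mul (hmax _) (hmax _) (penalizedPartition_pos μ hw _).le hpos.le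
      _ = _ := by ring
  by_contra hne
  exact absurd (Real.exp_le_one_iff.1 exp_le_one)
    (not_le.2 (mul_pos (by positivity) (pow_pos (norm_pos_iff.2 hne) 2)))

/-- Gaussian domination: a maximizer of the penalized partition function has to vanish wherever
`w` does not. -/
theorem partitionFunction_le_partitionFunction_zero (hw : 0 ≤ w)
    (hR : ∀ p, w p ≠ 0 → ∃ R : Reflection w, R.Separates p) (h : V × V → E) :
    partitionFunction μ w h ≤ partitionFunction μ w (0 : V × V → E) := by
  have penalized_le (δ : ℝ) (hδ : 0 < δ) :
      penalizedPartition μ w δ h ≤ partitionFunction μ w (0 : V × V → E) := by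
    obtain ⟨k, hk⟩ := exists_forall_penalizedPartition_le μ hw hδ
    have action_eq : action w k = action w 0 := by
      ext φ
      refine Finset.sum_congr rfl fun p _ => ?_
      obtain hp | hp := eq_or_ne (w p) 0
      · simp only [hp, zero_mul]
      · obtain ⟨R, hRp⟩ := hR p hp
        rw [eq_zero_of_forall_penalizedPartition_le μ hw hδ hk R hRp, Pi.zero_apply]
    refine (hk h).trans ?_
    rw [penalizedPartition, partitionFunction, action_eq]
    refine mul_le_of_le_one_right (partitionFunction_pos μ hw 0).le (Real.exp_le_one_iff.2 ?_)
    rw [neg_mul]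
    exact neg_nonpos.2 (by positivity)
  have penalty_tendsto : Filter.Tendsto (fun δ => penalizedPartition μ w δ h)
      (nhdsWithin 0 (Set.Ioi 0)) (nhds (partitionFunction μ w h)) := by
    refine Filter.Tendsto.mono_left ?_ nhdsWithin_le_nhds
    unfold penalizedPartition
    exact Continuous.tendsto' (by fun_prop) _ _ (by simp)
  exact le_of_tendsto penalty_tendsto (eventually_mem_nhdsWithin.mono penalized_le)

end GaussianDomination

theorem one_add_sq_div_two_le_cosh (t : ℝ) : 1 + t ^ 2 / 2 ≤ Real.cosh t := by
  have half_angle : Real.cosh t = 1 + 2 * Real.sinh (t / 2) ^ 2 := by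
    rw [← Real.cosh_sq_sub_sinh_sq (t / 2), ← mul_div_cancel₀ t (two_ne_zero' ℝ), mul_div_assoc,
      Real.cosh_two_mul]
    ring_nf
  have sq_le : (t / 2) ^ 2 ≤ Real.sinh (t / 2) ^ 2 := by
    rw [sq_le_sq, Real.abs_sinh]
    exact Real.self_le_sinh_iff.2 (abs_nonneg _)
  linarith

theorem le_of_forall_mul_le_exp_mul_sub_one {a b : ℝ}
    (h : ∀ u > 0, u * a ≤ Real.exp (u * b) - 1) : a ≤ b := by
  have bound (u : ℝ) (hu : 0 < u) : a ≤ b * Real.exp (u * b) := by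
    refine le_of_mul_le_mul_left ((h u hu).trans ?_) hu
    have := mul_le_mul_of_nonneg_right (Real.one_sub_le_exp_neg (u * b))
      (Real.exp_pos (u * b)).le
    rw [← Real.exp_add, neg_add_cancel, Real.exp_zero] at this
    linarith
  refine ge_of_tendsto (x := nhdsWithin 0 (Set.Ioi 0)) ?_
    (eventually_mem_nhdsWithin.mono bound)
  exact (Continuous.tendsto' (by fun_prop) _ _ (by simp)).mono_left nhdsWithin_le_nhds

section InfraredBound

variable {V E : Type*} [Fintype V] [NormedAddCommGroup E] [InnerProductSpace ℝ E]
  (w : V × V → ℝ) (h : V × V → E) (φ : V → E)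

/-- The linear response `∑ w(x, y) ⟪φ y - φ x, h(x, y)⟫` of the action to a shift field. -/
noncomputable def linearResponse : ℝ :=
  ∑ p, w p * ⟪φ p.2 - φ p.1, h p⟫

theorem action_eq_sub_linearResponse :
    action w h φ = action w 0 φ - 2 * linearResponse w h φ + ∑ p, w p * ‖h p‖ ^ 2 := by
  simp only [action, linearResponse, Finset.mul_sum, ← Finset.sum_sub_distrib,
    ← Finset.sum_add_distrib, Pi.zero_apply, sub_zero]
  refine Finset.sum_congr rfl fun p _ => ?_
  rw [norm_sub_sq_real]
  ring

theorem linearResponse_smul (t : ℝ) : linearResponse w (t • h) φ = t * linearResponse w h φ := by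
  simp only [linearResponse, Pi.smul_apply, inner_smul_right, Finset.mul_sum, mul_left_comm]

theorem linearResponse_neg : linearResponse w (-h) φ = -linearResponse w h φ := by
  simp [linearResponse]

theorem exp_neg_action_mul_exp_linearResponse :
    Real.exp (-action w 0 φ) * Real.exp (2 * linearResponse w h φ) =
      Real.exp (∑ p, w p * ‖h p‖ ^ 2) * Real.exp (-action w h φ) := by
  rw [action_eq_sub_linearResponse w h, ← Real.exp_add, ← Real.exp_add]
  ring_nf

theorem exp_neg_action_mul_linearResponse_sq_le :
    Real.exp (-action w 0 φ) * linearResponse w h φ ^ 2 ≤ 4⁻¹ *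
      (Real.exp (∑ p, w p * ‖h p‖ ^ 2) * (Real.exp (-action w h φ) + Real.exp (-action w (-h) φ)) -
        2 * Real.exp (-action w 0 φ)) := by
  have plus := exp_neg_action_mul_exp_linearResponse w h φ
  have minus := exp_neg_action_mul_exp_linearResponse w (-h) φ
  have cosh_bound := mul_le_mul_of_nonneg_left
    (one_add_sq_div_two_le_cosh (2 * linearResponse w h φ)) (Real.exp_pos (-action w 0 φ)).le
  simp only [linearResponse_neg, Pi.neg_apply, norm_neg, mul_neg] at minus
  rw [Real.cosh_eq] at cosh_bound
  linarith

variable [MeasurableSpace E] [BorelSpace E] (μ : Measure E) [IsProbabilityMeasure μ] {w}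

theorem integrable_exp_neg_action_mul_linearResponse_sq [SecondCountableTopology E] (hw : 0 ≤ w) :
    Integrable (fun φ => Real.exp (-action w 0 φ) * linearResponse w h φ ^ 2)
      (Measure.pi fun _ : V => μ) := by
  have bound := ((((integrable_exp_neg_action μ hw h).add
    (integrable_exp_neg_action μ hw (-h))).const_mul (Real.exp (∑ p, w p * ‖h p‖ ^ 2))).sub
      ((integrable_exp_neg_action μ hw 0).const_mul 2)).const_mul 4⁻¹
  refine bound.mono' ?_ (.of_forall fun φ => ?_)
  · refine (integrable_exp_neg_action μ hw 0).aestronglyMeasurable.mul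
      (Continuous.aestronglyMeasurable ?_)
    unfold linearResponse
    fun_prop
  · rw [Real.norm_of_nonneg (by positivity)]
    exact exp_neg_action_mul_linearResponse_sq_le w h φ

variable [FiniteDimensional ℝ E]

theorem two_mul_integral_linearResponse_sq_le_exp_sub_one (hw : 0 ≤ w)
    (hR : ∀ p, w p ≠ 0 → ∃ R : Reflection w, R.Separates p) :
    2 * ∫ φ, Real.exp (-action w 0 φ) * linearResponse w h φ ^ 2 ∂(Measure.pi fun _ : V => μ) ≤
      (Real.exp (∑ p, w p * ‖h p‖ ^ 2) - 1) * partitionFunction μ w (0 : V × V → E) := by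
  have integrable (k : V × V → E) := integrable_exp_neg_action μ hw k
  have sum_integrable := ((integrable h).add (integrable (-h))).const_mul
    (Real.exp (∑ p, w p * ‖h p‖ ^ 2))
  have penalty_integrable := (integrable 0).const_mul 2
  have bound := integral_mono (integrable_exp_neg_action_mul_linearResponse_sq h μ hw)
    ((sum_integrable.sub penalty_integrable).const_mul 4⁻¹)
    (exp_neg_action_mul_linearResponse_sq_le w h)
  simp only [Pi.add_apply, Pi.sub_apply] at bound sum_integrable
  rw [integral_const_mul, integral_sub sum_integrable penalty_integrable, integral_const_mul,
    integral_const_mul, integral_add (integrable h) (integrable (-h))] at bound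
  have domination (k : V × V → E) := mul_le_mul_of_nonneg_left
    (partitionFunction_le_partitionFunction_zero μ hw hR k)
    (Real.exp_pos (∑ p, w p * ‖h p‖ ^ 2)).le
  unfold partitionFunction at domination ⊢
  linarith [domination h, domination (-h)]

theorem integral_linearResponse_sq_le (hw : 0 ≤ w)
    (hR : ∀ p, w p ≠ 0 → ∃ R : Reflection w, R.Separates p) :
    ∫ φ, Real.exp (-action w 0 φ) * linearResponse w h φ ^ 2 ∂(Measure.pi fun _ : V => μ) ≤
      (∑ p, w p * ‖h p‖ ^ 2) / 2 * partitionFunction μ w (0 : V × V → E) := by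
  have hZ := partitionFunction_pos μ hw (0 : V × V → E)
  suffices 2 * (∫ φ, Real.exp (-action w 0 φ) * linearResponse w h φ ^ 2
      ∂(Measure.pi fun _ : V => μ)) / partitionFunction μ w (0 : V × V → E) ≤
      ∑ p, w p * ‖h p‖ ^ 2 by
    rw [div_le_iff₀ hZ] at this
    linarith
  refine le_of_forall_mul_le_exp_mul_sub_one fun u hu => ?_
  have scaled := two_mul_integral_linearResponse_sq_le_exp_sub_one (√u • h) μ hw hR
  simp only [linearResponse_smul, mul_pow, Real.sq_sqrt hu.le, mul_left_comm _ u,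
    integral_const_mul, Pi.smul_apply, norm_smul, Real.norm_eq_abs, sq_abs,
    ← Finset.mul_sum] at scaled
  rw [← mul_div_assoc, div_le_iff₀ hZ]
  exact scaled

end InfraredBound

section Flow

variable {V : Type*} [Fintype V]

/-- There is a flow of `ℓ²` norm at most `c` along the ordered pairs in `adj` carrying the mass
distribution `ρ` to `σ`. Conservation of mass is stated in weak form, against test functions. -/
def HasFlow (adj : V → V → Prop) (c : ℝ) (ρ σ : V → ℝ) : Prop :=
  ∃ f : EuclideanSpace ℝ (V × V), (∀ p, ¬adj p.1 p.2 → f p = 0) ∧ ‖f‖ ≤ c ∧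
    ∀ ψ : V → ℝ, ∑ p, f p * (ψ p.2 - ψ p.1) = ∑ x, σ x * ψ x - ∑ x, ρ x * ψ x

namespace HasFlow

variable {adj : V → V → Prop} {c c' : ℝ} {ρ σ τ : V → ℝ}

theorem refl (adj : V → V → Prop) (ρ : V → ℝ) : HasFlow adj 0 ρ ρ :=
  ⟨0, by simp, by simp, by simp⟩

theorem symm (h : HasFlow adj c ρ σ) : HasFlow adj c σ ρ := by
  obtain ⟨f, support, norm_le, conservation⟩ := h
  refine ⟨-f, fun p hp => by simp [support p hp], by rwa [norm_neg], fun ψ => ?_⟩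
  simp only [PiLp.neg_apply, neg_mul, Finset.sum_neg_distrib, conservation ψ, neg_sub]

theorem trans (h : HasFlow adj c ρ σ) (h' : HasFlow adj c' σ τ) : HasFlow adj (c + c') ρ τ := by
  obtain ⟨f, f_support, f_norm_le, f_conservation⟩ := h
  obtain ⟨g, g_support, g_norm_le, g_conservation⟩ := h'
  refine ⟨f + g, fun p hp => by simp [f_support p hp, g_support p hp],
    (norm_add_le f g).trans (add_le_add f_norm_le g_norm_le), fun ψ => ?_⟩
  simp only [PiLp.add_apply, add_mul, Finset.sum_add_distrib, f_conservation ψ,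
    g_conservation ψ]
  ring

theorem mono (h : HasFlow adj c ρ σ) (hc : c ≤ c') : HasFlow adj c' ρ σ :=
  let ⟨f, support, norm_le, conservation⟩ := h
  ⟨f, support, norm_le.trans hc, conservation⟩

end HasFlow

variable [DecidableEq V] {E : Type*} [NormedAddCommGroup E] [InnerProductSpace ℝ E]

theorem exists_linearResponse_eq_inner {adj : V → V → Prop} {c γ : ℝ} {x y : V} {w : V × V → ℝ}
    (hflow : HasFlow adj c (Pi.single x 1) (Pi.single y 1)) (hγ : 0 < γ)
    (hadj : ∀ x y, adj x y → γ ≤ w (x, y)) (u : E) :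
    ∃ h : V × V → E, (∀ φ, linearResponse w h φ = ⟪φ y - φ x, u⟫) ∧
      ∑ p, w p * ‖h p‖ ^ 2 ≤ c ^ 2 / γ * ‖u‖ ^ 2 := by
  obtain ⟨f, support, norm_le, conservation⟩ := hflow
  have adj_of_ne (p : V × V) (hp : f p ≠ 0) : adj p.1 p.2 := not_not.1 (mt (support p) hp)
  refine ⟨fun p => (f p / w p) • u, fun φ => ?_, ?_⟩
  · have mul_div (p : V × V) : w p * (f p / w p) = f p := by
      refine mul_div_cancel_of_imp' fun hp => by_contra fun hf => ?_
      exact (hγ.trans_le (hadj _ _ (adj_of_ne p hf))).ne' hp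
    simpa [linearResponse, inner_smul_right, inner_sub_left, ← mul_assoc, mul_div, Pi.single_apply]
      using conservation fun z => ⟪φ z, u⟫
  · have term_le (p : V × V) : w p * ‖(f p / w p) • u‖ ^ 2 ≤ ‖f p‖ ^ 2 / γ * ‖u‖ ^ 2 := by
      obtain hf | hf := eq_or_ne (f p) 0
      · simp [hf]
      have hw : γ ≤ w p := hadj _ _ (adj_of_ne p hf)
      calc
        _ = ‖f p‖ ^ 2 / w p * ‖u‖ ^ 2 := by
          have := (hγ.trans_le hw).ne'
          rw [norm_smul, mul_pow, norm_div, div_pow, Real.norm_eq_abs (w p), sq_abs]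
          field_simp
        _ ≤ _ := by gcongr
    calc
      _ ≤ ∑ p, ‖f p‖ ^ 2 / γ * ‖u‖ ^ 2 := Finset.sum_le_sum fun p _ => term_le p
      _ = ‖f‖ ^ 2 / γ * ‖u‖ ^ 2 := by
        rw [EuclideanSpace.norm_sq_eq, ← Finset.sum_mul, ← Finset.sum_div]
      _ ≤ _ := by gcongr

variable [MeasurableSpace E] [BorelSpace E] [FiniteDimensional ℝ E] (μ : Measure E)
  [IsProbabilityMeasure μ]

theorem integral_norm_sub_sq_le_of_hasFlow {adj : V → V → Prop} {c γ : ℝ} {x y : V}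
    {w : V × V → ℝ} (hw : 0 ≤ w) (hR : ∀ p, w p ≠ 0 → ∃ R : Reflection w, R.Separates p)
    (hflow : HasFlow adj c (Pi.single x 1) (Pi.single y 1)) (hγ : 0 < γ)
    (hadj : ∀ x y, adj x y → γ ≤ w (x, y)) :
    ∫ φ, Real.exp (-action w 0 φ) * ‖φ y - φ x‖ ^ 2 ∂(Measure.pi fun _ : V => μ) ≤
      Module.finrank ℝ E * (c ^ 2 / γ / 2) * partitionFunction μ w (0 : V × V → E) := by
  set b := stdOrthonormalBasis ℝ E
  choose h response_eq energy_le using fun i =>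
    exists_linearResponse_eq_inner hflow hγ hadj (b i)
  calc
    _ = ∫ φ, ∑ i, Real.exp (-action w 0 φ) * linearResponse w (h i) φ ^ 2
          ∂(Measure.pi fun _ : V => μ) := by
      simp only [response_eq, ← Finset.mul_sum, b.sum_sq_inner_left]
    _ = ∑ i, ∫ φ, Real.exp (-action w 0 φ) * linearResponse w (h i) φ ^ 2
          ∂(Measure.pi fun _ : V => μ) :=
      integral_finsetSum _ fun i _ => integrable_exp_neg_action_mul_linearResponse_sq (h i) μ hw
    _ ≤ ∑ _i, c ^ 2 / γ / 2 * partitionFunction μ w (0 : V × V → E) := by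
      refine Finset.sum_le_sum fun i _ => (integral_linearResponse_sq_le (h i) μ hw hR).trans ?_
      have := (partitionFunction_pos μ hw (0 : V × V → E)).le
      gcongr
      simpa using energy_le i
    _ = _ := by simp [mul_assoc]

end Flow

section TorusFlow

theorem sum_mul_comp_add_sub {G : Type*} [AddGroup G] [Fintype G] (e : G) (F ψ : G → ℝ) :
    ∑ x, F x * (ψ (x + e) - ψ x) = ∑ x, (F (x - e) - F x) * ψ x := by
  simp only [mul_sub, sub_mul, Finset.sum_sub_distrib]
  congr 1
  simpa using Equiv.sum_comp (Equiv.addRight e) fun x => F (x - e) * ψ x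

variable {d L : ℕ}

/-- The uniform probability density on the `m` consecutive points `b, b + 1, …` of the cycle
`ℤ/Lℤ`, meant for `1 ≤ m ≤ L`. -/
noncomputable def intervalDensity (b : ZMod L) (m : ℕ) (a : ZMod L) : ℝ :=
  if (a - b).val < m then (m : ℝ)⁻¹ else 0

/-- The flow spreading `intervalDensity b m` to `intervalDensity b (m + 1)`; its value at `a` is the
mass sent along the edge from `a` to `a + 1`. -/
noncomputable def intervalFlow (b : ZMod L) (m : ℕ) (a : ZMod L) : ℝ :=
  if (a - b).val < m then ((a - b).val + 1 : ℝ) / (m * (m + 1)) else 0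

theorem intervalDensity_nonneg (b : ZMod L) (m : ℕ) (a : ZMod L) : 0 ≤ intervalDensity b m a := by
  unfold intervalDensity
  positivity

theorem intervalFlow_nonneg (b : ZMod L) (m : ℕ) (a : ZMod L) : 0 ≤ intervalFlow b m a := by
  unfold intervalFlow
  positivity

theorem intervalFlow_le_intervalDensity (b : ZMod L) (m : ℕ) (a : ZMod L) :
    intervalFlow b m a ≤ intervalDensity b m a := by
  unfold intervalFlow intervalDensity
  split_ifs with ha
  · have hm : (0 : ℝ) < m := by exact_mod_cast ha.pos
    have ha' : ((a - b).val : ℝ) + 1 ≤ m := by exact_mod_cast ha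
    rw [inv_eq_one_div, div_le_div_iff₀ (by positivity) hm]
    nlinarith
  · exact le_rfl

/-- The uniform probability density on the box of side `m` with lowest corner `b`. -/
noncomputable def boxDensity (b : TorusPt d L) (m : ℕ) (x : TorusPt d L) : ℝ :=
  ∏ k, intervalDensity (b k) m (x k)

theorem boxDensity_one (b : TorusPt d L) : boxDensity b 1 = Pi.single b 1 := by
  ext x
  obtain rfl | hx := eq_or_ne x b
  · simp [boxDensity, intervalDensity]
  · obtain ⟨k, hk⟩ := Function.ne_iff.1 hx
    rw [Pi.single_eq_of_ne hx]
    exact Finset.prod_eq_zero (Finset.mem_univ k) (by simp [intervalDensity, sub_eq_zero, hk])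

theorem torusAdj_add_single (x : TorusPt d L) (i : Fin d) : torusAdj x (x + Pi.single i 1) :=
  ⟨i, Or.inl <| by ext k; obtain rfl | hk := eq_or_ne k i <;> simp [*]⟩

variable [NeZero L]

theorem intervalDensity_succ_sub (b : ZMod L) {m : ℕ} (hm : 1 ≤ m) (hmL : m < L) (a : ZMod L) :
    intervalDensity b (m + 1) a - intervalDensity b m a =
      intervalFlow b m (a - 1) - intervalFlow b m a := by
  obtain ⟨n, hn, hna⟩ : ∃ n < L, (n : ZMod L) = a - b :=
    ⟨(a - b).val, ZMod.val_lt _, ZMod.natCast_zmod_val _⟩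
  simp only [intervalDensity, intervalFlow, sub_right_comm a 1 b, ← hna, ZMod.val_natCast_of_lt hn]
  rcases n with _ | k
  · have pred_val : (((0 : ℕ) : ZMod L) - 1).val = L - 1 := by
      have : ((0 : ℕ) : ZMod L) - 1 = (L - 1 : ℕ) := by simp [Nat.cast_sub (hm.trans hmL.le)]
      rw [this, ZMod.val_natCast_of_lt (by lia)]
    rw [pred_val, if_pos (by lia), if_pos (by lia), if_neg (by lia), if_pos (by lia)]
    push_cast
    field
  · have pred_val : (((k + 1 : ℕ) : ZMod L) - 1).val = k := by
      rw [Nat.cast_succ, add_sub_cancel_right, ZMod.val_natCast_of_lt (by lia)]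
    rw [pred_val]
    obtain hk | hk | hk := lt_trichotomy (k + 1) m
    · rw [if_pos (by lia), if_pos (by lia), if_pos (by lia), if_pos (by lia)]
      push_cast
      field
    · rw [if_pos (by lia), if_neg (by lia), if_pos (by lia), if_neg (by lia), ← hk]
      push_cast
      field
    · rw [if_neg (by lia), if_neg (by lia), if_neg (by lia), if_neg (by lia)]

theorem card_val_sub_lt_le (b : ZMod L) (m : ℕ) :
    (Finset.univ.filter fun a : ZMod L => (a - b).val < m).card ≤ m := by
  conv_rhs => rw [← Finset.card_range m]
  exact Finset.card_le_card_of_injOn (fun a => (a - b).val) (fun a ha => by simpa using ha)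
    ((ZMod.val_injective L).comp (sub_left_injective (b := b))).injOn

theorem sum_sq_le_of_le_intervalDensity {b : ZMod L} {m : ℕ} {g : ZMod L → ℝ} (hg : ∀ a, 0 ≤ g a)
    (hgm : ∀ a, g a ≤ intervalDensity b m a) : ∑ a, g a ^ 2 ≤ (m : ℝ)⁻¹ := by
  calc
    _ ≤ ∑ a, intervalDensity b m a ^ 2 := by
      gcongr with a
      exacts [hg a, hgm a]
    _ = (Finset.univ.filter fun a : ZMod L => (a - b).val < m).card * (m : ℝ)⁻¹ ^ 2 := by
      simp [intervalDensity, ite_pow, Finset.sum_ite]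
    _ ≤ m * (m : ℝ)⁻¹ ^ 2 := by
      gcongr
      exact card_val_sub_lt_le b m
    _ = (m : ℝ)⁻¹ := by
      obtain rfl | hm := eq_or_ne m 0
      · simp
      · field

theorem hasFlow_of_forall_sub_eq (i : Fin d) {F ρ σ : TorusPt d L → ℝ}
    (h : ∀ x, σ x - ρ x = F (x - Pi.single i 1) - F x) :
    HasFlow torusAdj (√(∑ x, F x ^ 2)) ρ σ := by
  refine ⟨WithLp.toLp 2 fun p => if p.2 = p.1 + Pi.single i 1 then F p.1 else 0,
    fun p hp => if_neg fun (heq : p.2 = _) => hp (heq ▸ torusAdj_add_single p.1 i), ?_, fun ψ => ?_⟩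
  · simp [EuclideanSpace.norm_eq, Fintype.sum_prod_type, ite_pow]
  · simp only [Fintype.sum_prod_type, ite_mul, zero_mul, Finset.sum_ite_eq', Finset.mem_univ,
      if_true, sum_mul_comp_add_sub, ← h, sub_mul, Finset.sum_sub_distrib]

theorem hasFlow_prod_update (r : Fin d → ZMod L → ℝ) (i : Fin d) {q s : ZMod L → ℝ}
    (h : ∀ a, s a - r i a = q (a - 1) - q a) :
    HasFlow torusAdj (√(∏ k, ∑ a, Function.update r i q k a ^ 2)) (fun x => ∏ k, r k (x k))
      fun x => ∏ k, Function.update r i s k (x k) := by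
  have prod_update (g : ZMod L → ℝ) (x : TorusPt d L) :
      ∏ k, Function.update r i g k (x k) = g (x i) * ∏ k ∈ Finset.univ.erase i, r k (x k) := by
    rw [← Finset.mul_prod_erase _ _ (Finset.mem_univ i), Function.update_self]
    congr 1
    exact Finset.prod_congr rfl fun k hk => by
      rw [Function.update_of_ne (Finset.ne_of_mem_erase hk)]
  have norm_sq : ∏ k, ∑ a, Function.update r i q k a ^ 2 =
      ∑ x : TorusPt d L, (∏ k, Function.update r i q k (x k)) ^ 2 := by
    simp [Finset.prod_univ_sum, Finset.prod_pow]
  rw [norm_sq]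
  refine hasFlow_of_forall_sub_eq i fun x => ?_
  have prod_shift : ∏ k ∈ Finset.univ.erase i, r k ((x - Pi.single i 1 : TorusPt d L) k) =
      ∏ k ∈ Finset.univ.erase i, r k (x k) :=
    Finset.prod_congr rfl fun k hk => by simp [Finset.ne_of_mem_erase hk]
  rw [prod_update, prod_update, prod_update, prod_shift,
    ← Finset.mul_prod_erase _ _ (Finset.mem_univ i), ← sub_mul, ← sub_mul, h, Pi.sub_apply,
    Pi.single_eq_same]

theorem boxDensity_self (b : TorusPt d L) : boxDensity b L = fun _ => (L : ℝ)⁻¹ ^ d := by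
  ext x
  simp [boxDensity, intervalDensity, ZMod.val_lt]

theorem hasFlow_prod_intervalDensity_update (b : TorusPt d L) {s : Fin d → ℕ} {i : Fin d}
    (hs : ∀ k, s i ≤ s k) (hi : 1 ≤ s i) (hiL : s i < L) :
    HasFlow torusAdj ((s i : ℝ) ^ (d / 2 : ℝ))⁻¹ (fun x => ∏ k, intervalDensity (b k) (s k) (x k))
      fun x => ∏ k, intervalDensity (b k) (Function.update s i (s i + 1) k) (x k) := by
  have flow := hasFlow_prod_update (fun k => intervalDensity (b k) (s k)) i
    (s := intervalDensity (b i) (s i + 1)) (intervalDensity_succ_sub (b i) hi hiL)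
  have update_density (k : Fin d) :
      Function.update (fun k => intervalDensity (b k) (s k)) i (intervalDensity (b i) (s i + 1)) k =
        intervalDensity (b k) (Function.update s i (s i + 1) k) := by
    obtain rfl | hk := eq_or_ne k i <;> simp [*]
  simp only [update_density] at flow
  refine flow.mono (Real.sqrt_le_iff.2 ⟨by positivity, ?_⟩)
  have sum_sq_le (k : Fin d) : ∑ a, Function.update (fun k => intervalDensity (b k) (s k)) i
      (intervalFlow (b i) (s i)) k a ^ 2 ≤ (s i : ℝ)⁻¹ := by
    obtain rfl | hk := eq_or_ne k i
    · rw [Function.update_self]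
      exact sum_sq_le_of_le_intervalDensity (intervalFlow_nonneg _ _)
        (intervalFlow_le_intervalDensity _ _)
    · rw [Function.update_of_ne hk]
      refine (sum_sq_le_of_le_intervalDensity (intervalDensity_nonneg _ _) fun _ => le_rfl).trans ?_
      gcongr
      exact hs k
  calc
    _ ≤ ∏ _k : Fin d, (s i : ℝ)⁻¹ := by
      gcongr with k
      exact sum_sq_le k
    _ = ((s i : ℝ) ^ (d / 2 : ℝ))⁻¹ ^ 2 := by
      rw [Finset.prod_const, Finset.card_univ, Fintype.card_fin, inv_pow, inv_pow,
        ← Real.rpow_mul_natCast (s i).cast_nonneg, Nat.cast_two, div_mul_cancel₀ _ two_ne_zero,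
        Real.rpow_natCast]

theorem hasFlow_boxDensity_succ (b : TorusPt d L) {m : ℕ} (hm : 1 ≤ m) (hmL : m < L) :
    HasFlow torusAdj (d * ((m : ℝ) ^ (d / 2 : ℝ))⁻¹) (boxDensity b m) (boxDensity b (m + 1)) := by
  let side (S : Finset (Fin d)) : Fin d → ℕ := S.piecewise (fun _ => m + 1) fun _ => m
  have grow (S : Finset (Fin d)) :
      HasFlow torusAdj (S.card * ((m : ℝ) ^ (d / 2 : ℝ))⁻¹) (boxDensity b m)
        fun x => ∏ k, intervalDensity (b k) (side S k) (x k) := by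
    induction S using Finset.induction_on with
    | empty =>
      simp only [side, Finset.piecewise_empty, Finset.card_empty, Nat.cast_zero, zero_mul]
      exact HasFlow.refl _ _
    | insert i S hi ih =>
      have side_self : side S i = m := Finset.piecewise_eq_of_notMem _ _ _ hi
      have le_side (k : Fin d) : side S i ≤ side S k := by
        rw [side_self]
        exact Finset.le_piecewise_of_le_of_le S (fun _ => m.le_succ) (fun _ => le_rfl) k
      have step := hasFlow_prod_intervalDensity_update b le_side (hm.trans_eq side_self.symm)
        (side_self.trans_lt hmL)
      rw [side_self, ← Finset.piecewise_insert] at step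
      rw [Finset.card_insert_of_notMem hi, Nat.cast_succ, add_one_mul]
      exact ih.trans step
  unfold boxDensity at grow ⊢
  simpa [side] using grow Finset.univ

theorem hasFlow_single_boxDensity (b : TorusPt d L) {m : ℕ} (hm : m < L) :
    HasFlow torusAdj (d * ∑ k ∈ Finset.range (m + 1), ((k : ℝ) ^ (d / 2 : ℝ))⁻¹) (Pi.single b 1)
      (boxDensity b (m + 1)) := by
  induction m with
  | zero => exact boxDensity_one b ▸ (HasFlow.refl _ _).mono (by positivity)
  | succ m ih =>
    rw [Finset.sum_range_succ, mul_add]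
    exact (ih (by lia)).trans (hasFlow_boxDensity_succ b (by lia) hm)

theorem hasFlow_single_uniform (hd : 3 ≤ d) (b : TorusPt d L) :
    HasFlow torusAdj (d * ∑' m : ℕ, ((m : ℝ) ^ (d / 2 : ℝ))⁻¹) (Pi.single b 1)
      fun _ => (L : ℝ)⁻¹ ^ d := by
  have hL : L - 1 + 1 = L := Nat.sub_add_cancel NeZero.one_le
  have summable : Summable fun m : ℕ => ((m : ℝ) ^ (d / 2 : ℝ))⁻¹ := by
    refine Real.summable_nat_rpow_inv.2 ?_
    have : (3 : ℝ) ≤ d := by exact_mod_cast hd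
    linarith
  have flow := hasFlow_single_boxDensity b (m := L - 1) (by lia)
  rw [hL, boxDensity_self] at flow
  refine flow.mono ?_
  gcongr
  exact summable.sum_le_tsum _ fun m _ => by positivity

theorem hasFlow_single_single (hd : 3 ≤ d) (x y : TorusPt d L) :
    HasFlow torusAdj (2 * d * ∑' m : ℕ, ((m : ℝ) ^ (d / 2 : ℝ))⁻¹) (Pi.single x 1)
      (Pi.single y 1) :=
  ((hasFlow_single_uniform hd x).trans (hasFlow_single_uniform hd y).symm).mono (by linarith)

end TorusFlow

section TorusReflection

variable {d L : ℕ}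

/-- The reflection of the torus in the hyperplane midway between `x j = a` and `x j = a + 1`. -/
def torusMirror (j : Fin d) (a : ZMod L) (x : TorusPt d L) : TorusPt d L :=
  Function.update x j (2 * a + 1 - x j)

theorem torusMirror_self (j : Fin d) (a : ZMod L) (x : TorusPt d L) :
    torusMirror j a x j = 2 * a + 1 - x j :=
  Function.update_self ..

theorem torusMirror_of_ne {i j : Fin d} (hij : i ≠ j) (a : ZMod L) (x : TorusPt d L) :
    torusMirror j a x i = x i :=
  Function.update_of_ne hij ..

theorem torusMirror_involutive (j : Fin d) (a : ZMod L) :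
    Function.Involutive (torusMirror j a) := fun x => by
  simp [torusMirror]

theorem torusMirror_update (j : Fin d) (a : ZMod L) (x : TorusPt d L) (i : Fin d) (t : ZMod L) :
    torusMirror j a (Function.update x i t) =
      Function.update (torusMirror j a x) i (if i = j then 2 * a + 1 - t else t) := by
  obtain rfl | hij := eq_or_ne i j
  · simp [torusMirror]
  · simp [torusMirror, hij, hij.symm, Function.update_comm hij]

theorem torusAdj_torusMirror {x y : TorusPt d L} (h : torusAdj x y) (j : Fin d) (a : ZMod L) :
    torusAdj (torusMirror j a x) (torusMirror j a y) := by
  obtain ⟨i, h⟩ := h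
  refine ⟨i, ?_⟩
  obtain rfl | hij := eq_or_ne i j
  · rw [torusMirror_self]
    obtain rfl | rfl := h <;> rw [torusMirror_update, if_pos rfl]
    exacts [Or.inr (by ring_nf), Or.inl (by ring_nf)]
  · rw [torusMirror_of_ne hij]
    obtain rfl | rfl := h <;> rw [torusMirror_update, if_neg hij]
    exacts [Or.inl rfl, Or.inr rfl]

theorem torusAdj_torusMirror_iff (j : Fin d) (a : ZMod L) {x y : TorusPt d L} :
    torusAdj (torusMirror j a x) (torusMirror j a y) ↔ torusAdj x y := by
  refine ⟨fun h => ?_, fun h => torusAdj_torusMirror h j a⟩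
  simpa only [torusMirror_involutive j a _] using torusAdj_torusMirror h j a

/-- The edge weights of the nearest-neighbour torus: `γ` on each ordered pair of neighbours. -/
noncomputable def torusWeight (d L : ℕ) (γ : ℝ) (p : TorusPt d L × TorusPt d L) : ℝ :=
  if torusAdj p.1 p.2 then γ else 0

theorem torusWeight_nonneg {γ : ℝ} (hγ : 0 ≤ γ) : 0 ≤ torusWeight d L γ := fun p => by
  unfold torusWeight
  positivity

variable [NeZero L]

theorem val_neg_one_sub (t : ZMod L) : (-1 - t).val = L - 1 - t.val := by
  have ht := ZMod.val_lt t
  have : -1 - t = (L - 1 - t.val : ℕ) := by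
    rw [Nat.cast_sub (by lia), Nat.cast_sub (by lia)]
    simp
  rw [this, ZMod.val_natCast_of_lt (by lia)]

theorem val_neg_one_sub_lt_half_iff (hL : Even L) (t : ZMod L) :
    (-1 - t).val < L / 2 ↔ ¬t.val < L / 2 := by
  have ht := ZMod.val_lt t
  obtain ⟨n, hn⟩ := hL
  rw [val_neg_one_sub]
  lia

/-- The half of the torus in front of the hyperplane of `torusMirror j a`: the points whose `j`-th
coordinate is one of `a + 1, …, a + L / 2`. -/
def torusHalf (j : Fin d) (a : ZMod L) : Finset (TorusPt d L) :=
  Finset.univ.filter fun x => (x j - a - 1).val < L / 2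

theorem torusMirror_mem_torusHalf (hL : Even L) (j : Fin d) (a : ZMod L) (x : TorusPt d L) :
    torusMirror j a x ∈ torusHalf j a ↔ x ∉ torusHalf j a := by
  have : torusMirror j a x j - a - 1 = -1 - (x j - a - 1) := by
    rw [torusMirror_self]
    ring
  simp only [torusHalf, Finset.mem_filter, Finset.mem_univ, true_and, this,
    val_neg_one_sub_lt_half_iff hL]

theorem val_add_one_eq_mod (t : ZMod L) : (t + 1).val = (t.val + 1) % L := by
  rw [← ZMod.val_natCast]
  simp

-- A step of the cycle leaves the arc `0, …, L / 2 - 1` only at one of its two ends.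
theorem eq_neg_one_sub_of_cross_half (hL : Even L) {t u : ZMod L} (ht : t.val < L / 2)
    (hu : ¬u.val < L / 2) (h : u = t + 1 ∨ u = t - 1) : u = -1 - t := by
  refine ZMod.val_injective L ?_
  rw [val_neg_one_sub]
  have huL := ZMod.val_lt u
  obtain ⟨n, hn⟩ := hL
  obtain h | h := h
  · have hval := val_add_one_eq_mod t
    rw [← h, Nat.mod_eq_of_lt (by lia)] at hval
    lia
  · have hval := val_add_one_eq_mod u
    rw [eq_sub_iff_add_eq.1 h] at hval
    obtain hu' | hu' : u.val + 1 < L ∨ u.val + 1 = L := by lia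
    · rw [Nat.mod_eq_of_lt hu'] at hval
      lia
    · rw [hu', Nat.mod_self] at hval
      lia

theorem eq_torusMirror_of_cross (hL : Even L) {j : Fin d} {a : ZMod L} {x y : TorusPt d L}
    (hx : x ∈ torusHalf j a) (hy : y ∉ torusHalf j a) (h : torusAdj x y) :
    y = torusMirror j a x := by
  simp only [torusHalf, Finset.mem_filter, Finset.mem_univ, true_and] at hx hy
  obtain ⟨i, hi⟩ := h
  obtain rfl | hij := eq_or_ne i j
  · have cross : y i - a - 1 = -1 - (x i - a - 1) := by
      refine eq_neg_one_sub_of_cross_half hL hx hy (hi.imp ?_ ?_) <;> rintro rfl <;>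
        rw [Function.update_self] <;> ring
    have : y i = 2 * a + 1 - x i := by linear_combination cross
    rw [torusMirror, ← this]
    obtain rfl | rfl := hi <;> simp
  · have : y j = x j := by obtain rfl | rfl := hi <;> simp [hij.symm]
    exact absurd (this ▸ hx) hy

/-- The reflections of an even torus in the hyperplanes of `torusMirror`. -/
def torusReflection (hL : Even L) (γ : ℝ) (j : Fin d) (a : ZMod L) :
    Reflection (torusWeight d L γ) where
  mirror := torusMirror j a
  left := torusHalf j a
  mirror_involutive := torusMirror_involutive j a
  mirror_mem_left := torusMirror_mem_torusHalf hL j a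
  weight_mirror x y := by simp only [torusWeight, torusAdj_torusMirror_iff]
  eq_mirror_of_cross x hx y hy hxy :=
    eq_torusMirror_of_cross hL hx hy (of_not_not fun h => hxy (if_neg h))

theorem torusReflection_separates (hL : Even L) (γ : ℝ) {j : Fin d} {x y : TorusPt d L}
    (h : y j = x j + 1) : (torusReflection hL γ j (x j)).Separates (x, y) := by
  have half_pos : 0 < L / 2 := by
    have := NeZero.pos L
    obtain ⟨n, hn⟩ := hL
    lia
  have hx : x ∉ torusHalf j (x j) := by
    have := (val_neg_one_sub_lt_half_iff hL 0).not_left.2 (by simpa using half_pos)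
    simpa [torusHalf] using this
  have hy : y ∈ torusHalf j (x j) := by
    simpa [torusHalf, h] using half_pos
  exact iff_of_false hx (not_not.2 hy)

theorem exists_reflection_separates (hL : Even L) (γ : ℝ) (p : TorusPt d L × TorusPt d L)
    (hp : torusWeight d L γ p ≠ 0) : ∃ R : Reflection (torusWeight d L γ), R.Separates p := by
  obtain ⟨j, hj | hj⟩ : torusAdj p.1 p.2 := of_not_not fun h => hp (if_neg h)
  · exact ⟨_, torusReflection_separates hL γ (j := j) (by simp [hj])⟩
  · exact ⟨_, iff_not_comm.1 (torusReflection_separates hL γ (x := p.2) (y := p.1) (j := j)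
      (by simp [hj]))⟩

end TorusReflection

section Spins

variable {N : ℕ}

theorem isProbabilityMeasure_sphereUniform (hN : 1 ≤ N) :
    IsProbabilityMeasure (sphereUniform N) := by
  have : Nontrivial (EuclideanSpace ℝ (Fin N)) :=
    Module.nontrivial_of_finrank_pos (R := ℝ) (by rwa [finrank_euclideanSpace_fin])
  refine ⟨ENNReal.inv_mul_cancel ?_ (measure_ne_top _ _)⟩
  rw [Ne, Measure.measure_univ_eq_zero]
  exact Measure.toSphere_ne_zero _

/-- The law of a single spin in the absence of interaction, as a measure on the ambient space
`ℝ^N`. -/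
noncomputable def spinLaw (N : ℕ) : Measure (EuclideanSpace ℝ (Fin N)) :=
  (sphereUniform N).map Subtype.val

theorem isProbabilityMeasure_spinLaw (hN : 1 ≤ N) : IsProbabilityMeasure (spinLaw N) :=
  have := isProbabilityMeasure_sphereUniform hN
  Measure.isProbabilityMeasure_map measurable_subtype_coe.aemeasurable

theorem integral_pi_spinLaw {V : Type*} [Fintype V] (hN : 1 ≤ N)
    {F : (V → EuclideanSpace ℝ (Fin N)) → ℝ} (hF : Continuous F) :
    ∫ φ, F φ ∂(Measure.pi fun _ : V => spinLaw N) =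
      ∫ φ : V → SpinSphere N, F (fun x => φ x) ∂Measure.pi fun _ => sphereUniform N := by
  have := isProbabilityMeasure_sphereUniform hN
  have := isProbabilityMeasure_spinLaw hN
  unfold spinLaw
  rw [← Measure.pi_map_pi fun _ => measurable_subtype_coe.aemeasurable,
    integral_map (Continuous.aemeasurable (by fun_prop)) hF.aestronglyMeasurable]

theorem inner_eq_one_sub_norm_sub_sq_div_two (s t : SpinSphere N) :
    ⟪(s : EuclideanSpace ℝ (Fin N)), t⟫ = 1 - ‖(t : EuclideanSpace ℝ (Fin N)) - s‖ ^ 2 / 2 := by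
  rw [norm_sub_sq_real, norm_eq_of_mem_sphere, norm_eq_of_mem_sphere, real_inner_comm]
  ring

variable {d L : ℕ} [NeZero L]

theorem exp_neg_mul_hamiltonian (β : ℝ) (φ : SpinCfg d L N) :
    Real.exp (-β * hamiltonian φ) = Real.exp (∑ p, torusWeight d L (β / 2) p) *
      Real.exp (-action (torusWeight d L (β / 4)) 0
        fun x => (φ x : EuclideanSpace ℝ (Fin N))) := by
  rw [← Real.exp_add, ← sub_eq_add_neg]
  congr 1
  simp only [hamiltonian, action, ← Finset.sum_sub_distrib, ← Fintype.sum_prod_type',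
    Finset.mul_sum]
  refine Finset.sum_congr rfl fun p _ => ?_
  simp only [torusWeight, inner_eq_one_sub_norm_sub_sq_div_two, Pi.zero_apply, sub_zero]
  split_ifs <;> ring

theorem corrDot_eq (hN : 1 ≤ N) {β : ℝ} (hβ : 0 ≤ β) (x y : TorusPt d L) :
    corrDot d L N β x y = 1 - (∫ φ, Real.exp (-action (torusWeight d L (β / 4)) 0 φ) *
      ‖φ y - φ x‖ ^ 2 ∂(Measure.pi fun _ => spinLaw N)) /
        (2 * partitionFunction (spinLaw N) (torusWeight d L (β / 4)) 0) := by
  have := isProbabilityMeasure_sphereUniform hN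
  have := isProbabilityMeasure_spinLaw hN
  let boltzmann (φ : TorusPt d L → EuclideanSpace ℝ (Fin N)) : ℝ :=
    Real.exp (-action (torusWeight d L (β / 4)) 0 φ)
  have continuous_boltzmann : Continuous boltzmann := (continuous_exp_neg_action _).along_snd
  have partition_pos : 0 < partitionFunction (spinLaw N) (torusWeight d L (β / 4)) 0 :=
    partitionFunction_pos _ (torusWeight_nonneg (by positivity)) 0
  have integrable {F : SpinCfg d L N → ℝ} (hF : Continuous F) :
      Integrable F (Measure.pi fun _ => sphereUniform N) :=
    hF.integrable_of_hasCompactSupport (.of_compactSpace F)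
  have numerator : ∫ φ : SpinCfg d L N, ⟪(φ x : EuclideanSpace ℝ (Fin N)), φ y⟫ *
      boltzmann (fun z => φ z) ∂(Measure.pi fun _ => sphereUniform N) =
        partitionFunction (spinLaw N) (torusWeight d L (β / 4)) 0 -
          (∫ φ, boltzmann φ * ‖φ y - φ x‖ ^ 2 ∂(Measure.pi fun _ => spinLaw N)) / 2 := by
    rw [partitionFunction, integral_pi_spinLaw hN continuous_boltzmann,
      integral_pi_spinLaw hN (by fun_prop), ← integral_div,
      ← integral_sub (integrable (by fun_prop)) (integrable (by fun_prop))]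
    refine integral_congr_ae (.of_forall fun φ => ?_)
    simp only [inner_eq_one_sub_norm_sub_sq_div_two]
    ring
  have denominator : ∫ φ : SpinCfg d L N, boltzmann (fun z => φ z)
      ∂(Measure.pi fun _ => sphereUniform N) =
        partitionFunction (spinLaw N) (torusWeight d L (β / 4)) 0 :=
    (integral_pi_spinLaw hN continuous_boltzmann).symm
  simp only [corrDot, gibbsExp, spinMeasure, exp_neg_mul_hamiltonian,
    mul_left_comm _ (Real.exp _) (Real.exp _), integral_const_mul]
  rw [mul_inv, mul_mul_mul_comm, inv_mul_cancel₀ (Real.exp_pos _).ne', one_mul, denominator,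
    numerator]
  simp only [boltzmann]
  field

theorem one_sub_div_le_corrDot (hd : 3 ≤ d) (hN : 1 ≤ N) (hL : Even L) {β : ℝ} (hβ : 0 < β)
    (x y : TorusPt d L) :
    1 - N * (2 * d * ∑' m : ℕ, ((m : ℝ) ^ (d / 2 : ℝ))⁻¹) ^ 2 / β ≤ corrDot d L N β x y := by
  have := isProbabilityMeasure_spinLaw hN
  have hw : 0 ≤ torusWeight d L (β / 4) := torusWeight_nonneg (by positivity)
  have partition_pos := partitionFunction_pos (spinLaw N) hw 0
  have norm_sub_sq_le := integral_norm_sub_sq_le_of_hasFlow (spinLaw N) hw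
    (exists_reflection_separates hL (β / 4)) (hasFlow_single_single hd x y)
    (show 0 < β / 4 by positivity) fun x y hxy => (if_pos hxy).ge
  rw [finrank_euclideanSpace_fin] at norm_sub_sq_le
  rw [corrDot_eq hN hβ.le]
  refine sub_le_sub_left ?_ 1
  rw [div_le_iff₀ (by positivity)]
  refine norm_sub_sq_le.trans_eq ?_
  field

end Spins

end SpinON

theorem spin_corr_pointwise_uniform_positivity_general (d N : ℕ) (hd : 3 ≤ d) (hN : 1 ≤ N) :
    ∃ K : ℝ, ∀ β : ℝ, 0 < β → ∀ (L : ℕ) [NeZero L], Even L →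
      ∀ x y : TorusPt d L, 1 - K / β ≤ corrDot d L N β x y :=
  ⟨_, fun _ hβ _ _ hL x y => SpinON.one_sub_div_le_corrDot hd hN hL hβ x y⟩

/-- **Point-wise uniform positivity for the spin O(N) model.**
Let `d ≥ 3` and `N ≥ 1`. There exists `β₀` such that for every `β > β₀` there exist a
constant `C > 0` and `L₀` such that, for every even `L > L₀` and every `z ∈ T_L` with
`‖z‖_∞ < L/8`, one has `⟨φ_o ⬝ φ_z⟩_{L,N,β} ≥ C`. -/
theorem spin_corr_pointwise_uniform_positivity (d N : ℕ) (hd : 3 ≤ d) (hN : 1 ≤ N) :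
    ∃ β₀ : ℝ, ∀ β : ℝ, β₀ < β →
      ∃ C : ℝ, 0 < C ∧ ∃ L₀ : ℕ, ∀ (L : ℕ) [NeZero L], Even L → L₀ < L →
        ∀ z : TorusPt d L, (tnormInf z : ℝ) < (L : ℝ) / 8 →
          C ≤ corrDot d L N β (torusOrigin d L) z := by
  obtain ⟨K, hK⟩ := spin_corr_pointwise_uniform_positivity_general d N hd hN
  refine ⟨max K 0, fun β hβ => ?_⟩
  obtain ⟨hKβ, hβ⟩ := max_lt_iff.1 hβ
  exact ⟨1 - K / β, sub_pos.2 ((div_lt_one hβ).2 hKβ), 0, fun L _ hL _ z _ => hK β hβ L hL _ z⟩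
end

section
/- Let δ > 0 and let z ∈ T_L ∩ H_L with ‖z‖_∞ ≤ L/2. If ⟨φ_o^1 φ_z^1⟩_{L,N,β} ≥ 1/N − δ, then for every y ∈ Q_z ∩ H_L one has ⟨φ_o^1 φ_y^1⟩_{L,N,β} ≥ 1/N − 2^d δ. -/
open MeasureTheory Metric
open scoped RealInnerProductSpace BigOperators

/-- Reflection of torus sites through the plane of sites `{x : x_i = m}`:
`Θ(x)_i = 2m - x_i (mod L)` and the other coordinates are unchanged. -/
def reflSite {d L : ℕ} (i : Fin d) (m : ℕ) (x : TorusPt d L) : TorusPt d L :=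
  Function.update x i (2 * (m : ZMod L) - x i)

/-- Membership in the half-torus `T_L^+ = {x : x_i - m (mod L) ∈ {0,…,L/2}}`. -/
def inPlusSite {d L : ℕ} (i : Fin d) (m : ℕ) (x : TorusPt d L) : Prop :=
  (x i - (m : ZMod L)).val ≤ L / 2

/-- Membership in the other half-torus `T_L^- = Θ(T_L^+)`. -/
def inMinusSite {d L : ℕ} (i : Fin d) (m : ℕ) (x : TorusPt d L) : Prop :=
  inPlusSite i m (reflSite i m x)

/-- Membership in the fixed-point set `T_L^R = {x : x_i = m or x_i = m + L/2 (mod L)}`. -/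
def inFixedSite {d L : ℕ} (i : Fin d) (m : ℕ) (x : TorusPt d L) : Prop :=
  (x i - (m : ZMod L)).val = 0 ∨ (x i - (m : ZMod L)).val = L / 2

instance {d L : ℕ} (i : Fin d) (m : ℕ) : DecidablePred (inPlusSite (d := d) (L := L) i m) :=
  fun x => by unfold inPlusSite; infer_instance

instance {d L : ℕ} (i : Fin d) (m : ℕ) : DecidablePred (inMinusSite (d := d) (L := L) i m) :=
  fun x => by unfold inMinusSite inPlusSite; infer_instance

instance {d L : ℕ} (i : Fin d) (m : ℕ) : DecidablePred (inFixedSite (d := d) (L := L) i m) :=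
  fun x => by unfold inFixedSite; infer_instance

/-- Reflection through sites acting on spin configurations: `(Θφ)_x = φ_{Θ(x)}`. -/
def reflSiteCfg {d L N : ℕ} (i : Fin d) (m : ℕ) (φ : SpinCfg d L N) : SpinCfg d L N :=
  fun x => φ (reflSite i m x)

/-- The set `H_L` of vertices with all coordinates nonzero, together with the
nonzero points of the cartesian axes. -/
def inHL {d L : ℕ} (x : TorusPt d L) : Prop :=
  (∀ j, x j ≠ 0) ∨ ∃ i, x i ≠ 0 ∧ ∀ j, j ≠ i → x j = 0

/-- `ẑ_i = min(z_i, L - z_i)`, the torus distance of the `i`-th coordinate from `0`. -/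
def hatCoord {d L : ℕ} (z : TorusPt d L) (i : Fin d) : ℕ :=
  min (z i).val (L - (z i).val)

/-- The box `Q_z = {x : ∀ i, x_i ≤ ẑ_i or x_i > L - ẑ_i}` with corner `z`. -/
def inBoxQ {d L : ℕ} (z x : TorusPt d L) : Prop :=
  ∀ i, (x i).val ≤ hatCoord z i ∨ L - hatCoord z i < (x i).val

/-!
The Gibbs measure is reflection positive: if `g` depends only on the spins of a closed half of the
torus, then `⟨g · (g ∘ θ)⟩ ≥ 0` for the reflection `θ` exchanging the halves. Indeed the
exponential of the interaction across the mirror is a sum of terms `u · (u ∘ θ)` with positive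
coefficients, and given the spins on the mirror the two halves of a product measure are
independent copies.

Fix a direction `i`, and let `G w n` be the correlation between the origin and the point obtained
from `w` by setting its `i`-th coordinate to `n`. Reflection positivity for linear combinations of
first components, with mirrors of sites (`n` even) and mirrors of edge midpoints (`n` odd), gives
the Schwarz inequality `G w n ≤ G 0 n` and the convexity of `G 0 + G w`. This function is
symmetric under `n ↦ L - n`, hence decreasing up to `L / 2`. For `n ≤ m ≤ L / 2` therefore
`2 G w m ≤ G 0 m + G w m ≤ G 0 n + G w n ≤ 1 / N + G w n`,
so moving one coordinate of a point towards the origin at most doubles the defect `1 / N - G`.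
Moving the `d` coordinates of `z` to those of `y` in turn costs a factor of at most `2 ^ d`.
-/

section PositiveFunctional

theorem map_mul_pow_sum_nonneg {R M ι : Type*} [CommSemiring R] [AddCommMonoid M] [PartialOrder M]
    [IsOrderedAddMonoid M] {Λ : R →+ M} {Θ : R →* R} {A : Submonoid R}
    (hΛ : ∀ a ∈ A, 0 ≤ Λ (a * Θ a)) {s : Finset ι} {u : ι → R} (hu : ∀ j ∈ s, u j ∈ A)
    {a : R} (ha : a ∈ A) (n : ℕ) : 0 ≤ Λ (a * Θ a * (∑ j ∈ s, u j * Θ (u j)) ^ n) := by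
  induction n generalizing a with
  | zero => simpa using hΛ a ha
  | succ n ih =>
    have expand : a * Θ a * (∑ j ∈ s, u j * Θ (u j)) ^ (n + 1)
        = ∑ j ∈ s, (a * u j) * Θ (a * u j) * (∑ j ∈ s, u j * Θ (u j)) ^ n := by
      rw [pow_succ', ← mul_assoc, Finset.mul_sum, Finset.sum_mul]
      exact Finset.sum_congr rfl fun j _ => by rw [map_mul]; ring
    rw [expand, map_sum]
    exact Finset.sum_nonneg fun j hj => ih (A.mul_mem ha (hu j hj))

theorem map_mul_exp_sum_nonneg {R ι : Type*} [NormedCommRing R] [NormedAlgebra ℝ R]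
    [CompleteSpace R] {Λ : R →L[ℝ] ℝ} {Θ : R →* R} {A : Submonoid R}
    (hΛ : ∀ a ∈ A, 0 ≤ Λ (a * Θ a)) {s : Finset ι} {u : ι → R} (hu : ∀ j ∈ s, u j ∈ A)
    {a : R} (ha : a ∈ A) : 0 ≤ Λ (a * Θ a * NormedSpace.exp (∑ j ∈ s, u j * Θ (u j))) := by
  have series := ((NormedSpace.exp_series_hasSum_exp' (𝕂 := ℝ)
    (∑ j ∈ s, u j * Θ (u j))).mul_left (a * Θ a)).mapL Λ
  refine series.nonneg fun n => ?_
  rw [mul_smul_comm, map_smul, smul_eq_mul]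
  exact mul_nonneg (by positivity)
    (map_mul_pow_sum_nonneg (Λ := (Λ : R →+ ℝ)) hΛ hu ha n)

end PositiveFunctional

section CompactIntegral

variable {X : Type*} [TopologicalSpace X] [CompactSpace X] [MeasurableSpace X]
  [OpensMeasurableSpace X] (ν : Measure X) [IsFiniteMeasure ν]

variable {ν} in
theorem integrable_of_continuous_of_compactSpace {E : Type*} [NormedAddCommGroup E]
    [SecondCountableTopologyEither X E] {f : X → E} (hf : Continuous f) : Integrable f ν :=
  hf.integrable_of_hasCompactSupport (HasCompactSupport.of_compactSpace f)

/-- Integration against a finite measure on a compact space, as a continuous functional on the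
Banach algebra of continuous functions. -/
noncomputable def integralFunctional : C(X, ℝ) →L[ℝ] ℝ :=
  LinearMap.mkContinuous
    { toFun := fun f => ∫ x, f x ∂ν
      map_add' := fun f g => integral_add
        (integrable_of_continuous_of_compactSpace f.continuous)
        (integrable_of_continuous_of_compactSpace g.continuous)
      map_smul' := fun c f => integral_const_mul c f }
    (ν.real Set.univ) fun f => by
      rw [mul_comm]
      exact norm_integral_le_of_norm_le_const (.of_forall f.norm_coe_le_norm)

theorem integralFunctional_apply (f : C(X, ℝ)) : integralFunctional ν f = ∫ x, f x ∂ν := rfl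

end CompactIntegral

theorem measurePreserving_pi_comp_of_injective {ι κ : Type*} [Fintype ι] [Fintype κ]
    {S : κ → Type*} [∀ k, MeasurableSpace (S k)] (μ : ∀ k, Measure (S k))
    [∀ k, IsProbabilityMeasure (μ k)] {f : ι → κ} (hf : Function.Injective f) :
    MeasurePreserving (fun (ω : ∀ k, S k) i => ω (f i))
      (Measure.pi μ) (Measure.pi fun i => μ (f i)) := by
  refine ⟨by fun_prop, ?_⟩
  have indep := (ProbabilityTheory.iIndepFun_pi (μ := μ) (X := fun _ s => s)
    fun _ => aemeasurable_id).precomp hf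
  rw [indep.map_fun_eq_pi_map fun i => (measurable_pi_apply (f i)).aemeasurable]
  simp_rw [(measurePreserving_eval μ _).map_eq]

/-- `θ` is a reflection of `V` with closed half `P`: the two halves `P` and `θ ⁻¹' P` cover `V` and
meet only in fixed points of `θ`. -/
structure IsReflection {V : Type*} (θ : V → V) (P : Set V) : Prop where
  involutive : Function.Involutive θ
  mem_or_mem : ∀ x, x ∈ P ∨ θ x ∈ P
  eq_of_mem_of_mem : ∀ x, x ∈ P → θ x ∈ P → θ x = x

namespace IsReflection

variable {V : Type*} {θ : V → V} {P : Set V}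

section Measure

variable {S : Type*}

open Classical in
/-- Where the spin at `x` is read off when a configuration is assembled from three independent
ones: the first on fixed points, the second on the rest of `P`, the third, reflected, off `P`. -/
noncomputable def sourceIndex (θ : V → V) (P : Set V) (x : V) : V ⊕ V ⊕ V :=
  if θ x = x then .inl x else if x ∈ P then .inr (.inl x) else .inr (.inr (θ x))

theorem sourceIndex_injective (hθ : IsReflection θ P) :
    Function.Injective (sourceIndex θ P) := by
  intro x y hxy
  unfold sourceIndex at hxy
  split_ifs at hxy <;> simp_all [hθ.involutive.injective.eq_iff]

open Classical in
theorem elim_sourceIndex (ρ φ ψ : V → S) {x : V} (hx : x ∈ P) :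
    Sum.elim ρ (Sum.elim φ ψ) (sourceIndex θ P x)
      = (Function.fixedPoints θ).piecewise ρ φ x := by
  by_cases h : θ x = x <;> simp [sourceIndex, Set.piecewise, Function.IsFixedPt, h, hx]

open Classical in
theorem elim_sourceIndex_apply (hθ : IsReflection θ P) (ρ φ ψ : V → S) {x : V} (hx : x ∈ P) :
    Sum.elim ρ (Sum.elim φ ψ) (sourceIndex θ P (θ x))
      = (Function.fixedPoints θ).piecewise ρ ψ x := by
  by_cases h : θ x = x
  · simp [sourceIndex, Set.piecewise, Function.IsFixedPt, h]
  · have hθx : θ x ∉ P := fun h' => h (hθ.eq_of_mem_of_mem x hx h')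
    simp [sourceIndex, Set.piecewise, Function.IsFixedPt, hθ.involutive x, h, Ne.symm h, hθx]

variable [Fintype V] [MeasurableSpace S] (μ : Measure S) [IsProbabilityMeasure μ]

theorem measurePreserving_elim_sourceIndex (hθ : IsReflection θ P) :
    MeasurePreserving
      (fun (q : (V → S) × (V → S) × (V → S)) x =>
        Sum.elim q.1 (Sum.elim q.2.1 q.2.2) (sourceIndex θ P x))
      ((Measure.pi fun _ => μ).prod ((Measure.pi fun _ => μ).prod (Measure.pi fun _ => μ)))
      (Measure.pi fun _ => μ) := by
  have merge (α β : Type _) [Fintype α] [Fintype β] :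
      MeasurePreserving (fun q : (α → S) × (β → S) => Sum.elim q.1 q.2)
        ((Measure.pi fun _ => μ).prod (Measure.pi fun _ => μ)) (Measure.pi fun _ => μ) := by
    convert! measurePreserving_sumPiEquivProdPi_symm (X := fun _ : α ⊕ β => S) fun _ => μ
  exact (measurePreserving_pi_comp_of_injective (fun _ => μ) hθ.sourceIndex_injective).comp
    ((merge V (V ⊕ V)).comp ((MeasurePreserving.id _).prod (merge V V)))

-- Given the spins on the fixed points, `g` and its reflection are independent with equal law.
theorem integral_mul_comp_nonneg (hθ : IsReflection θ P) {g : (V → S) → ℝ} (hg : DependsOn g P)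
    (hint : Integrable (fun φ => g φ * g (φ ∘ θ)) (Measure.pi fun _ => μ)) :
    0 ≤ ∫ φ, g φ * g (φ ∘ θ) ∂(Measure.pi fun _ => μ) := by
  classical
  have mp := hθ.measurePreserving_elim_sourceIndex μ
  have split : ∀ ρ φ ψ : V → S,
      (g fun x => Sum.elim ρ (Sum.elim φ ψ) (sourceIndex θ P x)) *
          g ((fun x => Sum.elim ρ (Sum.elim φ ψ) (sourceIndex θ P x)) ∘ θ)
        = g ((Function.fixedPoints θ).piecewise ρ φ) *
          g ((Function.fixedPoints θ).piecewise ρ ψ) := fun ρ φ ψ => by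
    congr 1
    · exact hg fun x hx => elim_sourceIndex ρ φ ψ hx
    · exact hg fun x hx => hθ.elim_sourceIndex_apply ρ φ ψ hx
  have hint' := mp.integrable_comp_of_integrable hint
  rw [← mp.map_eq] at hint ⊢
  rw [integral_map mp.aemeasurable hint.aestronglyMeasurable]
  refine (integral_nonneg fun ρ => ?_).trans_eq (integral_prod _ hint').symm
  simp only [Function.comp_apply, split]
  rw [integral_prod_mul (fun φ => g ((Function.fixedPoints θ).piecewise ρ φ))
    fun ψ => g ((Function.fixedPoints θ).piecewise ρ ψ)]
  exact mul_self_nonneg _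

end Measure

end IsReflection

/-- The energy `∑ x y, J x y ⟪σ (φ x), σ (φ y)⟫` of the configuration `φ` with couplings `J` and
spin variable `σ`; the sum runs over ordered pairs. -/
noncomputable def pairEnergy {V S E : Type*} [Fintype V] [NormedAddCommGroup E]
    [InnerProductSpace ℝ E] (J : V → V → ℝ) (σ : S → E) (φ : V → S) : ℝ :=
  ∑ x, ∑ y, J x y * ⟪σ (φ x), σ (φ y)⟫

/-- The couplings `J` are invariant under the reflection `θ`, and the only interactions between the
two open halves are ferromagnetic ones between mirror images. -/
structure IsReflectionCoupling {V : Type*} (θ : V → V) (P : Set V) (J : V → V → ℝ) : Prop where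
  map_map : ∀ x y, J (θ x) (θ y) = J x y
  nonneg : ∀ x, 0 ≤ J x (θ x)
  eq_zero : ∀ x y, θ x ∉ P → y ∉ P → y ≠ θ x → J x y = 0

section Energy

variable {V S E : Type*} [NormedAddCommGroup E] [InnerProductSpace ℝ E] {θ : V → V} {P : Set V}

open Classical in
/-- The share of the pair `(x, y)` counted in the energy of the half `P`. A pair of fixed points
lies in both halves, so each half gets one half of it. -/
noncomputable def halfWeight (θ : V → V) (P : Set V) (x y : V) : ℝ :=
  if x ∈ P ∧ y ∈ P then if θ x = x ∧ θ y = y then 1 / 2 else 1 else 0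

open Classical in
theorem IsReflection.halfWeight_add_halfWeight (hθ : IsReflection θ P) (x y : V) :
    halfWeight θ P x y + halfWeight θ P (θ x) (θ y) + (if θ x ∉ P ∧ y ∉ P then 1 else 0)
      + (if x ∉ P ∧ θ y ∉ P then 1 else 0) = 1 := by
  have inv := hθ.involutive
  have position (v : V) : (θ v = v ∧ v ∈ P) ∨ (θ v ≠ v ∧ v ∈ P ∧ θ v ∉ P) ∨
      (θ v ≠ v ∧ v ∉ P ∧ θ v ∈ P) := by
    have cover := hθ.mem_or_mem v
    have fixed := hθ.eq_of_mem_of_mem v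
    grind
  unfold halfWeight
  rw [inv x, inv y]
  rcases position x with hx | hx | hx <;> rcases position y with hy | hy | hy <;>
    grind

variable [Fintype V]

theorem sum_sum_comp_of_bijective {W M : Type*} [Fintype W] [AddCommMonoid M] {f : V → W}
    (hf : Function.Bijective f) (T : W → W → M) :
    ∑ x, ∑ y, T (f x) (f y) = ∑ x, ∑ y, T x y := by
  rw [hf.sum_comp fun x => ∑ y, T x (f y)]
  exact Finset.sum_congr rfl fun x _ => hf.sum_comp (T x)

open Classical in
theorem sum_sum_ite_eq_sum_filter {M : Type*} [AddCommMonoid M] {T : V → V → M}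
    (hT : ∀ x y, θ x ∉ P → y ∉ P → y ≠ θ x → T x y = 0) :
    ∑ x, ∑ y, (if θ x ∉ P ∧ y ∉ P then T x y else 0) = ∑ x with θ x ∉ P, T x (θ x) := by
  rw [Finset.sum_filter]
  refine Finset.sum_congr rfl fun x _ => ?_
  by_cases hx : θ x ∈ P
  · simp [hx]
  · rw [Finset.sum_eq_single (θ x) (fun y _ hy => ?_) (by simp), if_pos ⟨hx, hx⟩, if_pos hx]
    exact ite_eq_right_iff.2 fun h => hT x y h.1 h.2 hy

open Classical in
theorem IsReflection.sum_sum_eq_add_add (hθ : IsReflection θ P) {T : V → V → ℝ}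
    (hT : ∀ x y, θ x ∉ P → y ∉ P → y ≠ θ x → T x y = 0 ∧ T (θ x) (θ y) = 0) :
    ∑ x, ∑ y, T x y = ∑ x, ∑ y, halfWeight θ P x y * T x y
      + ∑ x, ∑ y, halfWeight θ P x y * T (θ x) (θ y)
      + ∑ x with θ x ∉ P, (T x (θ x) + T (θ x) x) := by
  have reflected : ∑ x, ∑ y, halfWeight θ P x y * T (θ x) (θ y)
      = ∑ x, ∑ y, halfWeight θ P (θ x) (θ y) * T x y := by
    rw [← sum_sum_comp_of_bijective hθ.involutive.bijective]
    simp only [hθ.involutive _]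
  have cross : ∑ x, ∑ y, (if θ x ∉ P ∧ y ∉ P then T x y else 0) = ∑ x with θ x ∉ P, T x (θ x) :=
    sum_sum_ite_eq_sum_filter fun x y hx hy hxy => (hT x y hx hy hxy).1
  have cross' : ∑ x, ∑ y, (if x ∉ P ∧ θ y ∉ P then T x y else 0)
      = ∑ x with θ x ∉ P, T (θ x) x := by
    rw [← sum_sum_comp_of_bijective hθ.involutive.bijective]
    simp only [hθ.involutive _]
    rw [sum_sum_ite_eq_sum_filter fun x y hx hy hxy => (hT x y hx hy hxy).2]
    simp only [hθ.involutive _]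
  rw [Finset.sum_add_distrib, ← cross, ← cross', reflected, ← add_assoc]
  simp only [← Finset.sum_add_distrib]
  refine Finset.sum_congr rfl fun x _ => Finset.sum_congr rfl fun y _ => ?_
  have := hθ.halfWeight_add_halfWeight x y
  split_ifs at this ⊢ <;> linear_combination -T x y * this

open Classical in
theorem IsReflection.pairEnergy_eq_add_add (hθ : IsReflection θ P) {J : V → V → ℝ}
    (hJ : IsReflectionCoupling θ P J) (σ : S → E) (φ : V → S) :
    pairEnergy J σ φ = pairEnergy (halfWeight θ P * J) σ φ
      + pairEnergy (halfWeight θ P * J) σ (φ ∘ θ)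
      + ∑ x with θ x ∉ P, 2 * J x (θ x) * ⟪σ (φ x), σ (φ (θ x))⟫ := by
  have mirror (x : V) : J (θ x) x = J x (θ x) := by simpa [hθ.involutive x] using hJ.map_map x (θ x)
  have split := hθ.sum_sum_eq_add_add (T := fun x y => J x y * ⟪σ (φ x), σ (φ y)⟫)
    fun x y hx hy hxy => by simp [hJ.map_map, hJ.eq_zero x y hx hy hxy]
  simpa only [pairEnergy, Pi.mul_apply, Function.comp_apply, hJ.map_map, mul_assoc, mirror,
    real_inner_comm, ← two_mul] using split

theorem dependsOn_pairEnergy_halfWeight (J : V → V → ℝ) (σ : S → E) :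
    DependsOn (pairEnergy (halfWeight θ P * J) σ) P := by
  intro φ ψ h
  refine Finset.sum_congr rfl fun x _ => Finset.sum_congr rfl fun y _ => ?_
  by_cases hxy : x ∈ P ∧ y ∈ P
  · rw [h x hxy.1, h y hxy.2]
  · simp [halfWeight, hxy]

theorem continuous_pairEnergy [TopologicalSpace S] (J : V → V → ℝ) {σ : S → E}
    (hσ : Continuous σ) : Continuous (pairEnergy (V := V) J σ) := by
  unfold pairEnergy
  fun_prop

end Energy

/-- The continuous functions of a configuration that depend only on the coordinates in `P`. -/
def dependsOnSubmonoid {V S : Type*} [TopologicalSpace S] (P : Set V) (M : Type*)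
    [TopologicalSpace M] [Monoid M] [ContinuousMul M] : Submonoid C(V → S, M) where
  carrier := {f | DependsOn f P}
  one_mem' _ _ _ := rfl
  mul_mem' hf hg _ _ h := congrArg₂ (· * ·) (hf h) (hg h)

theorem sum_sqrt_mul_inner_mul {ι E : Type*} [Fintype ι] [NormedAddCommGroup E]
    [InnerProductSpace ℝ E] (b : OrthonormalBasis ι ℝ E) {c : ℝ} (hc : 0 ≤ c) (v w : E) :
    ∑ i, √c * ⟪v, b i⟫ * (√c * ⟪w, b i⟫) = c * ⟪v, w⟫ := by
  rw [← b.sum_inner_mul_inner, Finset.mul_sum]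
  refine Finset.sum_congr rfl fun i _ => ?_
  rw [mul_mul_mul_comm, Real.mul_self_sqrt hc, real_inner_comm (b i) w]

section ReflectionPositivity

variable {V S E : Type*} [Fintype V] [TopologicalSpace S] [CompactSpace S]
  [SecondCountableTopology S] [MeasurableSpace S] [OpensMeasurableSpace S]
  [NormedAddCommGroup E] [InnerProductSpace ℝ E] [FiniteDimensional ℝ E]

-- The interaction across the mirror is a sum of terms `u * (u ∘ θ)`, `u` depending only on `P`.
theorem IsReflection.integral_mul_comp_mul_exp_pairEnergy_nonneg {θ : V → V} {P : Set V}
    (hθ : IsReflection θ P) {J : V → V → ℝ} (hJ : IsReflectionCoupling θ P J)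
    (μ : Measure S) [IsProbabilityMeasure μ] {σ : S → E} (hσ : Continuous σ)
    {g : (V → S) → ℝ} (hg : Continuous g) (hgP : DependsOn g P) :
    0 ≤ ∫ φ, g φ * g (φ ∘ θ) * Real.exp (pairEnergy J σ φ) ∂(Measure.pi fun _ => μ) := by
  classical
  let Θ : C(V → S, ℝ) →* C(V → S, ℝ) :=
    ContinuousMap.compMonoidHom' ⟨fun φ => φ ∘ θ, by fun_prop⟩
  let A : Submonoid C(V → S, ℝ) := dependsOnSubmonoid P ℝ
  have positive : ∀ a ∈ A, 0 ≤ integralFunctional (Measure.pi fun _ => μ) (a * Θ a) :=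
    fun a ha => by
      rw [integralFunctional_apply]
      exact hθ.integral_mul_comp_nonneg μ ha
        (integrable_of_continuous_of_compactSpace (a * Θ a).continuous)
  let b := stdOrthonormalBasis ℝ E
  let u : V × Fin (Module.finrank ℝ E) → C(V → S, ℝ) := fun j =>
    ⟨fun φ => √(2 * J j.1 (θ j.1)) * ⟪σ (φ j.1), b j.2⟫, by fun_prop⟩
  let s : Finset (V × Fin (Module.finrank ℝ E)) := Finset.univ.filter (θ · ∉ P) ×ˢ Finset.univ
  have hu : ∀ j ∈ s, u j ∈ A := fun j hj φ ψ h => by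
    have hjP : j.1 ∈ P := (hθ.mem_or_mem j.1).resolve_right (by simpa [s] using hj)
    simp only [u, ContinuousMap.coe_mk, h j.1 hjP]
  let a : C(V → S, ℝ) := ⟨fun φ => g φ * Real.exp (pairEnergy (halfWeight θ P * J) σ φ),
    hg.mul (Real.continuous_exp.comp (continuous_pairEnergy _ hσ))⟩
  have ha : a ∈ A := fun φ ψ h => by
    simp only [a, ContinuousMap.coe_mk, hgP h, dependsOn_pairEnergy_halfWeight J σ h]
  have expanded := map_mul_exp_sum_nonneg positive hu ha
  rw [integralFunctional_apply] at expanded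
  refine expanded.trans_eq (integral_congr_ae (.of_forall fun φ => ?_))
  have mirror : ∑ j ∈ s, u j φ * u j (φ ∘ θ)
      = ∑ x with θ x ∉ P, 2 * J x (θ x) * ⟪σ (φ x), σ (φ (θ x))⟫ := by
    rw [Finset.sum_product]
    refine Finset.sum_congr rfl fun x _ => ?_
    exact sum_sqrt_mul_inner_mul b (mul_nonneg zero_le_two (hJ.nonneg x))
      (σ (φ x)) (σ (φ (θ x)))
  have value : (a * Θ a * NormedSpace.exp (∑ j ∈ s, u j * Θ (u j))) φ
      = a φ * a (φ ∘ θ) * Real.exp (∑ j ∈ s, u j φ * u j (φ ∘ θ)) := by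
    simp [Θ, NormedSpace.exp_continuousMap_eq, ← Real.exp_eq_exp_ℝ]
  rw [value, mirror]
  simp only [a, ContinuousMap.coe_mk, hθ.pairEnergy_eq_add_add hJ σ φ, Real.exp_add]
  ring

end ReflectionPositivity

section Sphere

variable {E F : Type*} [NormedAddCommGroup E] [NormedSpace ℝ E] [NormedAddCommGroup F]
  [NormedSpace ℝ F]

/-- The action of a linear isometry on unit spheres. -/
def sphereMap (e : E ≃ₗᵢ[ℝ] F) : sphere (0 : E) 1 → sphere (0 : F) 1 :=
  Subtype.map e fun _ hv => by simpa using hv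

theorem continuous_sphereMap (e : E ≃ₗᵢ[ℝ] F) : Continuous (sphereMap e) :=
  e.continuous.subtype_map _

theorem surjective_sphereMap (e : E ≃ₗᵢ[ℝ] F) : Function.Surjective (sphereMap e) :=
  fun t => ⟨sphereMap e.symm t, Subtype.ext (e.apply_symm_apply t)⟩

open scoped Pointwise in
theorem measurePreserving_sphereMap [FiniteDimensional ℝ E] [MeasurableSpace E] [BorelSpace E]
    [FiniteDimensional ℝ F] [MeasurableSpace F] [BorelSpace F]
    {μ : Measure E} {ν : Measure F} {e : E ≃ₗᵢ[ℝ] F} (he : MeasurePreserving e μ ν) :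
    MeasurePreserving (sphereMap e) μ.toSphere ν.toSphere := by
  have hm : Measurable (sphereMap e) := (continuous_sphereMap e).measurable
  refine ⟨hm, Measure.ext fun s hs => ?_⟩
  have cap : e '' (Subtype.val '' (sphereMap e ⁻¹' s)) = Subtype.val '' s := by
    conv_rhs => rw [← Set.image_preimage_eq s (surjective_sphereMap e)]
    simp only [Set.image_image, sphereMap, Subtype.map_coe]
  have cone : e '' (Set.Ioo (0 : ℝ) 1 • (Subtype.val '' (sphereMap e ⁻¹' s)))
      = Set.Ioo (0 : ℝ) 1 • (Subtype.val '' s) := by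
    rw [← cap]
    exact Set.image_image2_distrib_right fun r v => map_smul e r v
  rw [Measure.map_apply hm hs, Measure.toSphere_apply' _ (hm hs), Measure.toSphere_apply' _ hs,
    e.toLinearEquiv.finrank_eq, ← cone, ← he.measure_preimage_emb
      e.toHomeomorph.measurableEmbedding, e.injective.preimage_image]

end Sphere

instance isProbabilityMeasure_sphereUniform (N : ℕ) [NeZero N] :
    IsProbabilityMeasure (sphereUniform N) :=
  have : NeZero (volume : Measure (EuclideanSpace ℝ (Fin N))).toSphere :=
    ⟨Measure.toSphere_ne_zero _⟩
  isProbabilityMeasureSMul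

theorem measurePreserving_sphereMap_sphereUniform {N : ℕ}
    (e : EuclideanSpace ℝ (Fin N) ≃ₗᵢ[ℝ] EuclideanSpace ℝ (Fin N)) :
    MeasurePreserving (sphereMap e) (sphereUniform N) (sphereUniform N) :=
  (measurePreserving_sphereMap e.measurePreserving).smul_measure _

section Gibbs

variable {d L N : ℕ} [NeZero L]

/-- The nearest-neighbour couplings of `-β H`; an edge is two ordered pairs, hence `β / 2`. -/
noncomputable def edgeCoupling (d L : ℕ) (β : ℝ) (x y : TorusPt d L) : ℝ :=
  if torusAdj x y then β / 2 else 0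

theorem neg_mul_hamiltonian (β : ℝ) (φ : SpinCfg d L N) :
    -β * hamiltonian φ
      = pairEnergy (edgeCoupling d L β) ((↑) : SpinSphere N → EuclideanSpace ℝ (Fin N)) φ := by
  simp only [hamiltonian, pairEnergy, edgeCoupling, Finset.mul_sum]
  refine Finset.sum_congr rfl fun x _ => Finset.sum_congr rfl fun y _ => ?_
  split_ifs <;> ring

/-- The Gibbs probability measure whose expectation is `gibbsExp`. -/
noncomputable def gibbsMeasure (d L N : ℕ) [NeZero L] (β : ℝ) : Measure (SpinCfg d L N) :=
  (spinMeasure d L N).tilted fun φ => -β * hamiltonian φ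

theorem gibbsExp_eq_integral (β : ℝ) (f : SpinCfg d L N → ℝ) :
    gibbsExp d L N β f = ∫ φ, f φ ∂gibbsMeasure d L N β := by
  rw [gibbsMeasure, integral_tilted, gibbsExp, ← integral_const_mul]
  exact integral_congr_ae (.of_forall fun φ => by simp only [smul_eq_mul]; ring)

theorem continuous_hamiltonian : Continuous (hamiltonian (d := d) (L := L) (N := N)) := by
  refine (continuous_pairEnergy (edgeCoupling d L (-1)) continuous_subtype_val).congr fun φ => ?_
  rw [← neg_mul_hamiltonian, neg_neg, one_mul]

theorem continuous_exp_hamiltonian (β : ℝ) :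
    Continuous fun φ : SpinCfg d L N => Real.exp (-β * hamiltonian φ) :=
  Real.continuous_exp.comp (continuous_const.mul continuous_hamiltonian)

theorem gibbsExp_comp (β : ℝ) {Φ : SpinCfg d L N → SpinCfg d L N}
    (hΦ : MeasurePreserving Φ (spinMeasure d L N) (spinMeasure d L N))
    (hH : ∀ φ, hamiltonian (Φ φ) = hamiltonian φ) {f : SpinCfg d L N → ℝ} (hf : Continuous f) :
    gibbsExp d L N β (fun φ => f (Φ φ)) = gibbsExp d L N β f := by
  have hc : Continuous fun φ : SpinCfg d L N => f φ * Real.exp (-β * hamiltonian φ) :=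
    hf.mul (continuous_exp_hamiltonian β)
  have change := integral_map hΦ.aemeasurable
    (hc.aestronglyMeasurable (μ := (spinMeasure d L N).map Φ))
  rw [hΦ.map_eq] at change
  simp only [gibbsExp, change, hH]

variable [NeZero N]

instance isProbabilityMeasure_spinMeasure : IsProbabilityMeasure (spinMeasure d L N) :=
  inferInstanceAs (IsProbabilityMeasure (Measure.pi _))

instance isProbabilityMeasure_gibbsMeasure (β : ℝ) :
    IsProbabilityMeasure (gibbsMeasure d L N β) :=
  isProbabilityMeasure_tilted
    (integrable_of_continuous_of_compactSpace (continuous_exp_hamiltonian β))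

theorem gibbsExp_sum (β : ℝ) {ι : Type*} (s : Finset ι) {f : ι → SpinCfg d L N → ℝ}
    (hf : ∀ k ∈ s, Continuous (f k)) :
    gibbsExp d L N β (fun φ => ∑ k ∈ s, f k φ) = ∑ k ∈ s, gibbsExp d L N β (f k) := by
  simp only [gibbsExp_eq_integral]
  exact integral_finsetSum s fun k hk => integrable_of_continuous_of_compactSpace (hf k hk)

theorem gibbsExp_mul_comp_nonneg {β : ℝ} {θ : TorusPt d L → TorusPt d L} {P : Set (TorusPt d L)}
    (hθ : IsReflection θ P) (hJ : IsReflectionCoupling θ P (edgeCoupling d L β))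
    {g : SpinCfg d L N → ℝ} (hg : Continuous g) (hgP : DependsOn g P) :
    0 ≤ gibbsExp d L N β fun φ => g φ * g (φ ∘ θ) := by
  unfold gibbsExp
  simp only [neg_mul_hamiltonian]
  exact mul_nonneg (inv_nonneg.2 (integral_nonneg fun φ => (Real.exp_pos _).le))
    (hθ.integral_mul_comp_mul_exp_pairEnergy_nonneg hJ _ continuous_subtype_val hg hgP)

end Gibbs

section Correlation

variable {d L N : ℕ} [NeZero L] [NeZero N]

theorem corrOne_comm (β : ℝ) (x y : TorusPt d L) : corrOne d L N β x y = corrOne d L N β y x := by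
  simp only [corrOne, mul_comm]

theorem corrOne_map (β : ℝ) {f : TorusPt d L → TorusPt d L} (hf : Function.Bijective f)
    (hadj : ∀ x y, torusAdj (f x) (f y) ↔ torusAdj x y) (x y : TorusPt d L) :
    corrOne d L N β (f x) (f y) = corrOne d L N β x y := by
  refine gibbsExp_comp β (Φ := fun φ x => φ (f x))
    (f := fun φ => (φ x : EuclideanSpace ℝ (Fin N)) 0 * (φ y : EuclideanSpace ℝ (Fin N)) 0)
    (measurePreserving_pi_comp_of_injective (fun _ => sphereUniform N) hf.injective)
    (fun φ => ?_) (by fun_prop)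
  rw [hamiltonian, hamiltonian,
    ← sum_sum_comp_of_bijective hf fun x y => if torusAdj x y then ⟪(φ x).1, (φ y).1⟫ else 0]
  simp only [hadj]

-- Averaging over the components, which are exchangeable, leaves `‖φ x‖ ^ 2 / N = 1 / N`.
theorem corrOne_self (β : ℝ) (x : TorusPt d L) : corrOne d L N β x x = 1 / (N : ℝ) := by
  have exchange (j : Fin N) :
      gibbsExp d L N β (fun φ => (φ x : EuclideanSpace ℝ (Fin N)) j ^ 2) = corrOne d L N β x x := by
    let e : EuclideanSpace ℝ (Fin N) ≃ₗᵢ[ℝ] EuclideanSpace ℝ (Fin N) :=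
      LinearIsometryEquiv.piLpCongrLeft 2 ℝ ℝ (Equiv.swap 0 j)
    have he (v : EuclideanSpace ℝ (Fin N)) : e v 0 = v j := by
      simp [e, LinearIsometryEquiv.piLpCongrLeft_apply, Equiv.piCongrLeft'_apply]
    have swap := gibbsExp_comp β (Φ := fun φ x => sphereMap e (φ x))
      (f := fun φ => (φ x : EuclideanSpace ℝ (Fin N)) 0 * (φ x : EuclideanSpace ℝ (Fin N)) 0)
      (measurePreserving_pi _ _ fun _ : TorusPt d L => measurePreserving_sphereMap_sphereUniform e)
      (fun φ => by simp only [hamiltonian, sphereMap, Subtype.map_coe, e.inner_map_map])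
      (by fun_prop)
    simpa only [corrOne, sphereMap, Subtype.map_coe, he, sq] using swap
  have unit (φ : SpinCfg d L N) : ∑ j, (φ x : EuclideanSpace ℝ (Fin N)) j ^ 2 = 1 := by
    rw [← EuclideanSpace.real_norm_sq_eq, norm_eq_of_mem_sphere, one_pow]
  have total := gibbsExp_sum β Finset.univ
    (f := fun (j : Fin N) (φ : SpinCfg d L N) => (φ x : EuclideanSpace ℝ (Fin N)) j ^ 2)
    fun j _ => by fun_prop
  simp only [unit, exchange, gibbsExp_eq_integral β fun _ => 1, integral_const, probReal_univ,
    smul_eq_mul, mul_one, Finset.sum_const, Finset.card_univ, Fintype.card_fin, nsmul_eq_mul]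
    at total
  exact eq_one_div_of_mul_eq_one_right total.symm

theorem corrOne_le_one_div (β : ℝ) (x y : TorusPt d L) :
    corrOne d L N β x y ≤ 1 / (N : ℝ) := by
  have integrable (x y : TorusPt d L) : Integrable (fun φ : SpinCfg d L N =>
      (φ x : EuclideanSpace ℝ (Fin N)) 0 * (φ y : EuclideanSpace ℝ (Fin N)) 0)
      (gibbsMeasure d L N β) :=
    integrable_of_continuous_of_compactSpace (by fun_prop)
  have am_gm : 2 * corrOne d L N β x y ≤ corrOne d L N β x x + corrOne d L N β y y := by
    simp only [corrOne, gibbsExp_eq_integral]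
    rw [← integral_const_mul, ← integral_add (integrable x x) (integrable y y)]
    refine integral_mono ((integrable x y).const_mul 2) ((integrable x x).add (integrable y y))
      fun φ => ?_
    simpa only [mul_assoc, Pi.add_apply, sq] using
      two_mul_le_add_sq ((φ x : EuclideanSpace ℝ (Fin N)) 0) ((φ y : EuclideanSpace ℝ (Fin N)) 0)
  rw [corrOne_self, corrOne_self] at am_gm
  linarith

theorem sum_sum_corrOne_nonneg {β : ℝ} {θ : TorusPt d L → TorusPt d L} {P : Set (TorusPt d L)}
    (hθ : IsReflection θ P) (hJ : IsReflectionCoupling θ P (edgeCoupling d L β))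
    {ι : Type*} [Fintype ι] (c : ι → ℝ) {p : ι → TorusPt d L} (hp : ∀ k, p k ∈ P) :
    0 ≤ ∑ k, ∑ l, c k * c l * corrOne d L N β (p k) (θ (p l)) := by
  let g : SpinCfg d L N → ℝ := fun φ => ∑ k, c k * (φ (p k) : EuclideanSpace ℝ (Fin N)) 0
  have hg : Continuous g := by fun_prop
  have hgP : DependsOn g P := fun φ ψ h => Finset.sum_congr rfl fun k _ => by rw [h _ (hp k)]
  refine (gibbsExp_mul_comp_nonneg hθ hJ hg hgP).trans_eq ?_
  simp only [g, Finset.sum_mul_sum, Function.comp_apply]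
  rw [gibbsExp_sum _ _ fun k _ => by fun_prop]
  refine Finset.sum_congr rfl fun k _ => ?_
  rw [gibbsExp_sum _ _ fun l _ => by fun_prop]
  refine Finset.sum_congr rfl fun l _ => ?_
  simp only [corrOne, gibbsExp_eq_integral, ← integral_const_mul]
  exact integral_congr_ae (.of_forall fun φ => by ring)

end Correlation

theorem antitoneOn_of_symmetric_of_convex {α : Type*} [AddCommGroup α] [LinearOrder α]
    [IsOrderedAddMonoid α] {F : ℕ → α} {L : ℕ} (hsymm : ∀ n ≤ L, F (L - n) = F n)
    (hconv : ∀ n, n + 2 ≤ L → F (n + 1) - F n ≤ F (n + 2) - F (n + 1)) :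
    AntitoneOn F {n | 2 * n ≤ L} := by
  have slope_mono : MonotoneOn (fun n => F (n + 1) - F n) (Set.Iio L) :=
    monotoneOn_of_le_succ Set.ordConnected_Iio fun n _ _ hn => hconv n hn
  refine antitoneOn_of_succ_le ⟨fun _ _ n hn k hk => ?_⟩ fun n _ _ hn => ?_
  · exact (Nat.mul_le_mul_left 2 hk.2).trans hn
  rw [Nat.succ_eq_succ, Set.mem_ofPred_eq] at hn
  have slope_le := slope_mono (a := n) (b := L - (n + 1)) (Set.mem_Iio.2 (by omega))
    (Set.mem_Iio.2 (by omega)) (by omega)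
  have mirror : L - (n + 1) + 1 = L - n := by omega
  simp only [mirror, hsymm n (by omega), hsymm (n + 1) (by omega)] at slope_le
  rw [← neg_sub (F (n + 1)), le_neg_self_iff] at slope_le
  exact sub_nonpos.1 slope_le

section Torus

variable {d L : ℕ}

theorem two_mul_hatCoord_le (x : TorusPt d L) (i : Fin d) : 2 * hatCoord x i ≤ L := by
  unfold hatCoord
  omega

theorem hatCoord_le_of_inBoxQ {z y : TorusPt d L} (hy : inBoxQ z y) (i : Fin d) :
    hatCoord y i ≤ hatCoord z i := by
  have := hy i
  unfold hatCoord at *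
  omega

theorem torusAdj_iff_sub_eq_single {x y : TorusPt d L} :
    torusAdj x y ↔ ∃ j, y - x = Pi.single j 1 ∨ y - x = Pi.single j (-1) := by
  have update_add (j : Fin d) (c : ZMod L) :
      Function.update x j (x j + c) = Pi.single j c + x := by
    ext k
    obtain rfl | h := eq_or_ne k j <;> simp [*, add_comm]
  simp only [torusAdj, sub_eq_add_neg (x _), update_add, sub_eq_iff_eq_add]

theorem torusAdj_sub_right_iff (v x y : TorusPt d L) :
    torusAdj (x - v) (y - v) ↔ torusAdj x y := by
  simp only [torusAdj_iff_sub_eq_single, sub_sub_sub_cancel_right]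

/-- The reflection `xᵢ ↦ c - xᵢ` of the torus in the plane `xᵢ = c / 2`, which is a plane of sites
for `c = 0` and a plane of edge midpoints for `c = -1`. -/
def coordReflection (i : Fin d) (c : ZMod L) (x : TorusPt d L) : TorusPt d L :=
  Function.update x i (c - x i)

theorem coordReflection_involutive (i : Fin d) (c : ZMod L) :
    Function.Involutive (coordReflection i c) := by
  intro x
  simp [coordReflection]

theorem coordReflection_update (i : Fin d) (c t : ZMod L) (w : TorusPt d L) :
    coordReflection i c (Function.update w i t) = Function.update w i (c - t) := by
  simp [coordReflection]

theorem coordReflection_sub_coordReflection (i : Fin d) (c : ZMod L) (x y : TorusPt d L) :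
    coordReflection i c y - coordReflection i c x = coordReflection i 0 (y - x) := by
  simp [coordReflection, ← Function.update_sub]

theorem coordReflection_zero_single (i j : Fin d) (a : ZMod L) :
    coordReflection i 0 (Pi.single j a) = Pi.single j (if j = i then -a else a) := by
  ext k
  obtain rfl | hji := eq_or_ne j i
  · simp [coordReflection, Pi.single]
  · obtain rfl | hki := eq_or_ne k i <;> simp [coordReflection, *, Ne.symm hji]

theorem torusAdj_coordReflection_iff (i : Fin d) (c : ZMod L) (x y : TorusPt d L) :
    torusAdj (coordReflection i c x) (coordReflection i c y) ↔ torusAdj x y := by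
  simp only [torusAdj_iff_sub_eq_single, coordReflection_sub_coordReflection,
    (coordReflection_involutive i 0).eq_iff, coordReflection_zero_single]
  refine exists_congr fun j => ?_
  split_ifs
  · rw [neg_neg, or_comm]
  · rfl

/-- The closed half of the torus attached to the reflection `coordReflection i c`. -/
def coordHalf (i : Fin d) (c : ZMod L) : Set (TorusPt d L) :=
  {x | (x i).val ≤ (c - x i).val}

variable [NeZero L]

theorem isReflection_coordReflection (i : Fin d) (c : ZMod L) :
    IsReflection (coordReflection i c) (coordHalf i c) where
  involutive := coordReflection_involutive i c
  mem_or_mem x := by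
    simpa [coordHalf, coordReflection] using le_total (x i).val (c - x i).val
  eq_of_mem_of_mem x hx hx' := by
    have val_eq : (c - x i).val = (x i).val :=
      le_antisymm (by simpa [coordHalf, coordReflection] using hx') hx
    rw [coordReflection, ZMod.val_injective L val_eq, Function.update_eq_self]

theorem val_neg_natCast_sub {e : ℕ} (he : e ≤ 1) (t : ZMod L) :
    (-(e : ZMod L) - t).val = if t.val + e = 0 then 0 else L - e - t.val := by
  have ht := t.val_lt
  split_ifs with h
  · obtain ⟨ht0, rfl⟩ := Nat.add_eq_zero_iff.1 h
    simp [(ZMod.val_eq_zero t).1 ht0]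
  · rw [← ZMod.val_natCast_of_lt (n := L) (a := L - e - t.val) (by omega),
      Nat.cast_sub (by omega), Nat.cast_sub (by omega)]
    simp

theorem val_add_one_eq_ite (t : ZMod L) :
    (t + 1).val = if t.val + 1 = L then 0 else t.val + 1 := by
  have ht := t.val_lt
  rw [← ZMod.natCast_zmod_val t, ← Nat.cast_succ, ZMod.val_natCast, ZMod.natCast_zmod_val]
  split_ifs with h
  · rw [Nat.succ_eq_add_one, h, Nat.mod_self]
  · exact Nat.mod_eq_of_lt (by omega)

theorem eq_neg_natCast_sub_of_adjacent {e : ℕ} (he : e ≤ 1) {s t : ZMod L}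
    (ht : t.val < (-(e : ZMod L) - t).val) (hs : (-(e : ZMod L) - s).val < s.val)
    (hst : s = t + 1 ∨ t = s + 1) : s = -(e : ZMod L) - t := by
  have hs_lt := s.val_lt
  have ht_lt := t.val_lt
  apply ZMod.val_injective L
  rw [val_neg_natCast_sub he] at ht hs ⊢
  rcases hst with h | h <;> have hval := congrArg ZMod.val h <;>
    rw [val_add_one_eq_ite] at hval <;> split_ifs at * <;> omega

theorem isReflectionCoupling_edgeCoupling {β : ℝ} (hβ : 0 ≤ β) (i : Fin d) {e : ℕ} (he : e ≤ 1) :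
    IsReflectionCoupling (coordReflection i (-(e : ZMod L))) (coordHalf i (-(e : ZMod L)))
      (edgeCoupling d L β) where
  map_map x y := by simp only [edgeCoupling, torusAdj_coordReflection_iff]
  nonneg x := by
    unfold edgeCoupling
    positivity
  eq_zero x y hx hy hxy := by
    have hx' : (x i).val < (-(e : ZMod L) - x i).val := by
      simpa [coordHalf, coordReflection] using hx
    have hy' : (-(e : ZMod L) - y i).val < (y i).val := by simpa [coordHalf] using hy
    refine if_neg fun ⟨j, hj⟩ => hxy ?_
    obtain rfl | hji := eq_or_ne j i
    · have crossing : y j = -(e : ZMod L) - x j := by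
        refine eq_neg_natCast_sub_of_adjacent he hx' hy' ?_
        rcases hj with rfl | rfl <;> simp
      rw [coordReflection, ← crossing]
      rcases hj with rfl | rfl <;> simp
    · have parallel : y i = x i := by rcases hj with rfl | rfl <;> simp [hji.symm]
      rw [parallel] at hy'
      exact absurd hx' hy'.asymm

theorem update_natCast_mem_coordHalf (i : Fin d) {e a : ℕ} (he : e ≤ 1) (ha : 2 * a + e ≤ L)
    (w : TorusPt d L) :
    Function.update w i (a : ZMod L) ∈ coordHalf i (-(e : ZMod L)) := by
  have hL := NeZero.pos L
  have hval : (a : ZMod L).val = a := ZMod.val_natCast_of_lt (by omega)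
  rw [coordHalf, Set.mem_ofPred_eq, Function.update_self, val_neg_natCast_sub he, hval]
  split_ifs <;> omega

end Torus

section LineCorrelation

variable {d L N : ℕ} [NeZero L] [NeZero N]

theorem corrOne_eq_corrOne_zero_sub (β : ℝ) (x y : TorusPt d L) :
    corrOne d L N β x y = corrOne d L N β 0 (y - x) := by
  have translate := corrOne_map (N := N) β (f := fun v => v - x) (Equiv.subRight x).bijective
    (torusAdj_sub_right_iff x) x y
  rw [← translate, sub_self]

theorem corrOne_zero_neg (β : ℝ) (x : TorusPt d L) :
    corrOne d L N β 0 (-x) = corrOne d L N β 0 x := by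
  rw [← zero_sub, ← corrOne_eq_corrOne_zero_sub, corrOne_comm]

/-- The correlation of the origin with the point `t` of the line through `w` in direction `i`. -/
noncomputable def lineCorr (N : ℕ) [NeZero N] (β : ℝ) (i : Fin d) (w : TorusPt d L)
    (t : ZMod L) : ℝ :=
  corrOne d L N β 0 (Function.update w i t)

theorem lineCorr_neg (β : ℝ) (i : Fin d) (w : TorusPt d L) (t : ZMod L) :
    lineCorr N β i w (-t) = lineCorr N β i w t := by
  have reflect := corrOne_map (N := N) β (coordReflection_involutive i 0).bijective
    (torusAdj_coordReflection_iff i 0) 0 (Function.update w i t)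
  rw [coordReflection_update, zero_sub] at reflect
  rw [lineCorr, lineCorr, ← reflect]
  simp [coordReflection]

theorem lineCorr_neg_left (β : ℝ) (i : Fin d) (w : TorusPt d L) (t : ZMod L) :
    lineCorr N β i (-w) t = lineCorr N β i w t := by
  rw [← lineCorr_neg, lineCorr, Function.update_neg, corrOne_zero_neg, lineCorr]

theorem lineCorr_natCast_sub (β : ℝ) (i : Fin d) (w : TorusPt d L) {n : ℕ} (hn : n ≤ L) :
    lineCorr N β i w ((L - n : ℕ) : ZMod L) = lineCorr N β i w n := by
  rw [Nat.cast_sub hn, ZMod.natCast_self, zero_sub, lineCorr_neg]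

theorem lineCorr_hatCoord (β : ℝ) (i : Fin d) (x : TorusPt d L) :
    lineCorr N β i x (hatCoord x i : ZMod L) = corrOne d L N β 0 x := by
  have at_self : lineCorr N β i x ((x i).val : ZMod L) = corrOne d L N β 0 x := by
    rw [ZMod.natCast_zmod_val, lineCorr, Function.update_eq_self]
  rcases min_choice (x i).val (L - (x i).val) with h | h
  · rw [hatCoord, h, at_self]
  · rw [hatCoord, h, lineCorr_natCast_sub β i x (x i).val_le, at_self]

theorem corrOne_update_coordReflection_update (β : ℝ) (i : Fin d) (v w : TorusPt d L)
    (a b c : ZMod L) :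
    corrOne d L N β (Function.update v i a) (coordReflection i c (Function.update w i b))
      = lineCorr N β i (w - v) (a + b - c) := by
  rw [coordReflection_update, corrOne_eq_corrOne_zero_sub, ← Function.update_sub, ← lineCorr_neg,
    lineCorr]
  congr 2
  ring

theorem sum_sum_lineCorr_nonneg {β : ℝ} (hβ : 0 ≤ β) (i : Fin d) {ι : Type*} [Fintype ι]
    (c : ι → ℝ) (w : ι → TorusPt d L) {a : ι → ℕ} {e : ℕ} (he : e ≤ 1)
    (ha : ∀ k, 2 * a k + e ≤ L) :
    0 ≤ ∑ k, ∑ l, c k * c l * lineCorr N β i (w l - w k) ((a k + a l + e : ℕ) : ZMod L) := by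
  have positive := sum_sum_corrOne_nonneg (N := N) (isReflection_coordReflection i _)
    (isReflectionCoupling_edgeCoupling hβ i he) c
    fun k => update_natCast_mem_coordHalf i he (ha k) (w k)
  simpa only [corrOne_update_coordReflection_update, sub_neg_eq_add, Nat.cast_add] using positive

theorem lineCorr_le_lineCorr_zero {β : ℝ} (hβ : 0 ≤ β) (i : Fin d) (w : TorusPt d L) {n : ℕ}
    (hn : n ≤ L) : lineCorr N β i w n ≤ lineCorr N β i (0 : TorusPt d L) n := by
  have halves : n / 2 + n / 2 + n % 2 = n := by omega
  have positive := sum_sum_lineCorr_nonneg (N := N) hβ i ![1, -1] ![0, w]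
    (a := fun _ => n / 2) (e := n % 2) (by omega) fun _ => by omega
  simp only [halves, Fin.sum_univ_two, Matrix.cons_val, sub_self, sub_zero, zero_sub,
    lineCorr_neg_left] at positive
  linarith

theorem lineCorr_zero_add_lineCorr_convex {β : ℝ} (hβ : 0 ≤ β) (i : Fin d) (w : TorusPt d L)
    {n : ℕ} (hn : n + 2 ≤ L) :
    2 * (lineCorr N β i (0 : TorusPt d L) (n + 1 : ℕ) + lineCorr N β i w (n + 1 : ℕ))
      ≤ lineCorr N β i (0 : TorusPt d L) n + lineCorr N β i w n
        + (lineCorr N β i (0 : TorusPt d L) (n + 2 : ℕ) + lineCorr N β i w (n + 2 : ℕ)) := by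
  obtain ⟨a, e, he, rfl⟩ : ∃ a e, e ≤ 1 ∧ a + a + e = n := ⟨n / 2, n % 2, by omega, by omega⟩
  have positive := sum_sum_lineCorr_nonneg (N := N) hβ i ![1, 1, -1, -1] ![0, w, 0, w]
    (a := ![a, a, a + 1, a + 1]) he fun k => by fin_cases k <;> simp <;> omega
  have left : a + 1 + a + e = a + a + e + 1 := by ring
  have right : a + (a + 1) + e = a + a + e + 1 := by ring
  have both : a + 1 + (a + 1) + e = a + a + e + 2 := by ring
  simp only [Fin.sum_univ_four, Matrix.cons_val, left, right, both, sub_self, sub_zero, zero_sub,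
    lineCorr_neg_left] at positive
  linarith

theorem antitoneOn_lineCorr_zero_add_lineCorr {β : ℝ} (hβ : 0 ≤ β) (i : Fin d)
    (w : TorusPt d L) :
    AntitoneOn (fun n : ℕ => lineCorr N β i (0 : TorusPt d L) n + lineCorr N β i w n)
      {n | 2 * n ≤ L} :=
  antitoneOn_of_symmetric_of_convex
    (fun n hn => by simp only [lineCorr_natCast_sub β i _ hn])
    fun n hn => by linarith [lineCorr_zero_add_lineCorr_convex (N := N) hβ i w hn]

theorem one_div_sub_corrOne_update_le {β : ℝ} (hβ : 0 ≤ β) {i : Fin d} {x : TorusPt d L}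
    {t : ZMod L} (ht : hatCoord (Function.update x i t) i ≤ hatCoord x i) :
    1 / (N : ℝ) - corrOne d L N β 0 (Function.update x i t)
      ≤ 2 * (1 / (N : ℝ) - corrOne d L N β 0 x) := by
  have antitone := antitoneOn_lineCorr_zero_add_lineCorr (N := N) hβ i x
    (two_mul_hatCoord_le (Function.update x i t) i) (two_mul_hatCoord_le x i) ht
  have on_line := lineCorr_hatCoord (N := N) β i (Function.update x i t)
  simp only [lineCorr, Function.update_idem] at antitone on_line
  have at_axis := lineCorr_le_lineCorr_zero (N := N) hβ i x
    ((Nat.le_mul_of_pos_left _ two_pos).trans (two_mul_hatCoord_le x i))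
  have at_x := lineCorr_hatCoord (N := N) β i x
  have axis_le := corrOne_le_one_div (N := N) β 0
    (Function.update 0 i (hatCoord (Function.update x i t) i : ZMod L))
  simp only [lineCorr] at at_axis at_x
  linarith

theorem one_div_sub_corrOne_piecewise_le {β : ℝ} (hβ : 0 ≤ β) {y z : TorusPt d L}
    (hyz : ∀ i, hatCoord y i ≤ hatCoord z i) (S : Finset (Fin d)) :
    1 / (N : ℝ) - corrOne d L N β 0 (S.piecewise y z)
      ≤ 2 ^ S.card * (1 / (N : ℝ) - corrOne d L N β 0 z) := by
  induction S using Finset.induction_on with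
  | empty => simp
  | insert i S hi ih =>
    rw [Finset.piecewise_insert, Finset.card_insert_of_notMem hi, pow_succ', mul_assoc]
    refine (one_div_sub_corrOne_update_le hβ ?_).trans (mul_le_mul_of_nonneg_left ih zero_le_two)
    simpa [hatCoord, hi] using hyz i

end LineCorrelation

theorem spin_lower_bound_in_box_HL_general (d L N : ℕ) [NeZero L] [NeZero N] (β : ℝ) (hβ : 0 ≤ β)
    (δ : ℝ) (z : TorusPt d L) (hz : 1 / (N : ℝ) - δ ≤ corrOne d L N β (torusOrigin d L) z)
    (y : TorusPt d L) (hy : inBoxQ z y) :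
    1 / (N : ℝ) - 2 ^ d * δ ≤ corrOne d L N β (torusOrigin d L) y := by
  have decay := one_div_sub_corrOne_piecewise_le (N := N) hβ (hatCoord_le_of_inBoxQ hy)
    Finset.univ
  rw [Finset.piecewise_univ, Finset.card_univ, Fintype.card_fin] at decay
  have scaled := mul_le_mul_of_nonneg_left (sub_le_comm.1 hz) (pow_nonneg zero_le_two d)
  exact sub_le_comm.1 (decay.trans scaled)

/-- **Propagation of a lower bound inside the box `Q_z` (points of `H_L`).**
Let `δ > 0` and `z ∈ T_L ∩ H_L` with `‖z‖_∞ ≤ L/2`. If `⟨φ_o^1 φ_z^1⟩ ≥ 1/N - δ`, then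
`⟨φ_o^1 φ_y^1⟩ ≥ 1/N - 2^d δ` for every `y ∈ Q_z ∩ H_L`. -/
theorem spin_lower_bound_in_box_HL
    (d L N : ℕ) [NeZero L] [NeZero N] (hd : 2 ≤ d) (hL : Even L)
    (β : ℝ) (hβ : 0 ≤ β) (δ : ℝ) (hδ : 0 < δ)
    (z : TorusPt d L) (hzH : inHL z) (hznorm : 2 * tnormInf z ≤ L)
    (hz : 1 / (N : ℝ) - δ ≤ corrOne d L N β (torusOrigin d L) z) :
    ∀ y : TorusPt d L, inBoxQ z y → inHL y →
      1 / (N : ℝ) - 2 ^ d * δ ≤ corrOne d L N β (torusOrigin d L) y :=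
  fun y hy _ => spin_lower_bound_in_box_HL_general d L N β hβ δ z hz y hy
end
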